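/- arXiv:1103.0247 — 9 statements merged into one kernel-verified Lean document; each statement's English description precedes it below -/
import Mathlib

section
/- Let Y be a separable Banach space containing no subspace isomorphic to ℓ¹(ℕ). Then the following are equivalent: (i) the dual space Y* is separable; (ii) every equivalent norm on Y* is Ba((Y*)_w)-measurable. -/
/-- The Baire σ-algebra of the weak topology of a normed space `X`. -/
def BaW (X : Type*) [NormedAddCommGroup X] [NormedSpace ℝ X] : MeasurableSpace X :=
  ⨆ φ : X →L[ℝ] ℝ, MeasurableSpace.comap φ Real.measurableSpace

/-- `N` is an equivalent norm on `X`. -/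
def IsEquivNorm {X : Type*} [NormedAddCommGroup X] [NormedSpace ℝ X] (N : X → ℝ) : Prop :=
  (∀ x y : X, N (x + y) ≤ N x + N y) ∧
  (∀ (a : ℝ) (x : X), N (a • x) = |a| * N x) ∧
  ∃ c C : ℝ, 0 < c ∧ 0 < C ∧ ∀ x : X, c * ‖x‖ ≤ N x ∧ N x ≤ C * ‖x‖

open MeasureTheory TopologicalSpace Metric Set Filter Topology

theorem aux_helly {Y : Type*} [NormedAddCommGroup Y] [NormedSpace ℝ Y] [SeparableSpace Y]
    {ι : Type*} [Fintype ι] (f : ι → Y →L[ℝ] ℝ) (c : ι → ℝ) (M : ℝ) (hM : 0 < M)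
    (h : ∀ a : ι → ℝ, ∑ i, a i * c i ≤ M * ‖∑ i, a i • f i‖) (δ : ℝ) (hδ : 0 < δ) :
    ∃ n : ℕ, ‖denseSeq Y n‖ ≤ M + 1 ∧ ∀ i, |f i (denseSeq Y n) - c i| < δ := by
  classical
  have key : ∃ x : Y, ‖x‖ ≤ M ∧ ∀ i, |f i x - c i| < δ := by
    let T : Y →L[ℝ] (ι → ℝ) := ContinuousLinearMap.pi f
    have hc : c ∈ closure (T '' closedBall 0 M) := by
      by_contra hc
      have hconv : Convex ℝ (closure (T '' closedBall 0 M)) :=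
        ((convex_closedBall (0 : Y) M).linear_image T.toLinearMap).closure
      obtain ⟨g, u, h1, h2⟩ := geometric_hahn_banach_closed_point hconv isClosed_closure hc
      have hg : ∀ v : ι → ℝ, g v = ∑ i, g (Pi.single i 1) * v i := by
        intro v
        conv_lhs => rw [pi_eq_sum_univ' v]
        simp only [map_sum, map_smul, smul_eq_mul]
        refine Finset.sum_congr rfl fun i _ => ?_
        rw [mul_comm]
      set F : Y →L[ℝ] ℝ := ∑ i, g (Pi.single i 1) • f i with hF
      have hFx : ∀ x, F x = g (T x) := by
        intro x
        rw [hg]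
        simp [hF, T]
      have hb : ∀ z ∈ closedBall (0 : Y) M, ‖F z‖ ≤ u := by
        intro z hz
        rw [Real.norm_eq_abs, abs_le]
        constructor
        · have := h1 (T (-z)) (subset_closure ⟨-z, by simpa using hz, rfl⟩)
          rw [← hFx, map_neg] at this
          linarith
        · have := h1 (T z) (subset_closure ⟨z, hz, rfl⟩)
          rw [← hFx] at this
          linarith
      have hu : 0 ≤ u := (norm_nonneg _).trans (hb 0 (by simp [hM.le]))
      have hn : ‖F‖ ≤ u / M := F.opNorm_le_bound (by positivity)
        (LinearMap.bound_of_ball_bound' hM u F.toLinearMap hb)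
      have := h (fun i => g (Pi.single i 1))
      rw [← hg, ← hF] at this
      have h3 : M * ‖F‖ ≤ u := by
        rw [le_div_iff₀ hM] at hn; linarith
      linarith
    rw [Metric.mem_closure_iff] at hc
    obtain ⟨b, ⟨x, hx, rfl⟩, hb⟩ := hc δ hδ
    refine ⟨x, by simpa using hx, fun i => ?_⟩
    rw [dist_comm, dist_pi_lt_iff hδ] at hb
    exact hb i
  obtain ⟨x, hx, hx2⟩ := key
  have ho : IsOpen ({y : Y | ‖y‖ < M + 1} ∩ ⋂ i, {y : Y | |f i y - c i| < δ}) := by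
    refine (isOpen_lt continuous_norm continuous_const).inter (isOpen_iInter_of_finite fun i => ?_)
    exact isOpen_lt (by fun_prop) continuous_const
  obtain ⟨n, hn⟩ := (denseRange_denseSeq Y).exists_mem_open ho
    ⟨x, by simp only [mem_ofPred_eq]; linarith, by simpa using hx2⟩
  refine ⟨n, hn.1.le, ?_⟩
  simpa using hn.2

theorem aux_l1 {Y : Type*} [NormedAddCommGroup Y] [NormedSpace ℝ Y] [CompleteSpace Y]
    (x : ℕ → Y) (M c : ℝ) (hc : 0 < c) (hx : ∀ n, ‖x n‖ ≤ M)
    (h : ∀ (n : ℕ) (a : ℕ → ℝ), c * ∑ i ∈ Finset.range n, |a i| ≤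
      ‖∑ i ∈ Finset.range n, a i • x i‖) :
    ∃ S : Submodule ℝ Y, IsClosed (S : Set Y) ∧
      Nonempty (lp (fun _ : ℕ => ℝ) 1 ≃L[ℝ] S) := by
  have hM : 0 ≤ M := (norm_nonneg _).trans (hx 0)
  have hs : ∀ a : lp (fun _ : ℕ => ℝ) 1, Summable fun i => |a i| := by
    intro a
    have := (lp.memℓp a).summable (by norm_num)
    simpa using this
  have hn : ∀ a : lp (fun _ : ℕ => ℝ) 1, ‖a‖ = ∑' i, |a i| := by
    intro a
    have := lp.norm_eq_tsum_rpow (p := 1) (by norm_num) a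
    simpa using this
  have hs1 : ∀ a : lp (fun _ : ℕ => ℝ) 1, Summable fun i => ‖a i • x i‖ := by
    intro a
    refine Summable.of_nonneg_of_le (fun _ => norm_nonneg _) (fun i => ?_) ((hs a).mul_right M)
    rw [norm_smul, Real.norm_eq_abs]
    exact mul_le_mul_of_nonneg_left (hx i) (abs_nonneg _)
  have hs2 : ∀ a : lp (fun _ : ℕ => ℝ) 1, Summable fun i => a i • x i := fun a => (hs1 a).of_norm
  let T0 : lp (fun _ : ℕ => ℝ) 1 →ₗ[ℝ] Y :=
    { toFun := fun a => ∑' i, a i • x i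
      map_add' := fun a b => by
        rw [← (hs2 a).tsum_add (hs2 b)]
        simp [add_smul]
      map_smul' := fun r a => by
        rw [RingHom.id_apply, ← (hs2 a).tsum_const_smul]
        simp [mul_smul] }
  let T : lp (fun _ : ℕ => ℝ) 1 →L[ℝ] Y := T0.mkContinuous M (by
    intro a
    change ‖∑' i, a i • x i‖ ≤ _
    refine (norm_tsum_le_tsum_norm (hs1 a)).trans ?_
    rw [hn, ← tsum_mul_left]
    refine (hs1 a).tsum_le_tsum (fun i => ?_) ((hs a).mul_left M)
    rw [norm_smul, Real.norm_eq_abs, mul_comm]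
    exact mul_le_mul_of_nonneg_right (hx i) (abs_nonneg _))
  have hT : ∀ a, c * ‖a‖ ≤ ‖T a‖ := by
    intro a
    have h1 : Tendsto (fun n => ‖∑ i ∈ Finset.range n, a i • x i‖) atTop (𝓝 ‖T a‖) :=
      ((hs2 a).hasSum.tendsto_sum_nat).norm
    have h2 : Tendsto (fun n => c * ∑ i ∈ Finset.range n, |a i|) atTop (𝓝 (c * ‖a‖)) := by
      rw [hn]
      exact ((hs a).hasSum.tendsto_sum_nat).const_mul c
    exact le_of_tendsto_of_tendsto' h2 h1 fun n => h n a
  have hanti : AntilipschitzWith (Real.toNNReal c⁻¹) T := by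
    refine T.antilipschitz_of_bound fun a => ?_
    rw [Real.coe_toNNReal _ (by positivity), inv_mul_eq_div, le_div_iff₀ hc, mul_comm]
    exact hT a
  have hcl : IsClosed (Set.range T) := hanti.isClosed_range T.uniformContinuous
  refine ⟨T.range, hcl, ⟨T.equivRange hanti.injective hcl⟩⟩

theorem aux_indep {Y : Type*} [NormedAddCommGroup Y] [NormedSpace ℝ Y] [CompleteSpace Y]
    [SeparableSpace Y]
    (hl1 : ¬ ∃ S : Submodule ℝ Y, IsClosed (S : Set Y) ∧
      Nonempty (lp (fun _ : ℕ => ℝ) 1 ≃L[ℝ] S))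
    (G : (Y →L[ℝ] ℝ) →L[ℝ] ℝ) (r s : ℝ) (hrs : r < s) (L : Set (Y →L[ℝ] ℝ))
    (hL : ∀ f ∈ L, ‖f‖ ≤ 1) (hne : L.Nonempty) :
    ∃ W : Set (ℕ → ℝ), IsOpen W ∧ (∃ f ∈ L, (fun n => f (denseSeq Y n)) ∈ W) ∧
      ((∀ f ∈ L, (fun n => f (denseSeq Y n)) ∈ W → r ≤ G f) ∨
       (∀ f ∈ L, (fun n => f (denseSeq Y n)) ∈ W → G f ≤ s)) := by
  classical
  by_contra! H
  apply hl1
  set d := denseSeq Y with hd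
  set δ := (s - r) / 3 with hδ
  have hδ0 : 0 < δ := by rw [hδ]; linarith
  let cond : ℝ → Bool → Prop := fun v b => if b then s - δ < v else v < r + δ
  have hcond : ∀ v b b', cond v b → cond v b' → b = b' := by
    intro v b b' h1 h2
    cases b <;> cases b' <;> simp only [cond, if_true, Bool.false_eq_true, if_false] at h1 h2 ⊢ <;>
      linarith
  let P : Finset ℕ → Prop := fun S => ∀ σ : ℕ → Bool, ∃ f ∈ L, ∀ k ∈ S, cond (f (d k)) (σ k)
  have step : ∀ S, P S → ∃ k, ‖d k‖ ≤ ‖G‖ + 1 + 1 ∧ k ∉ S ∧ P (insert k S) := by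
    intro S hS
    have hW : ∀ τ : S → Bool, ∃ p : Bool → Y →L[ℝ] ℝ, ∀ b, p b ∈ L ∧
        (∀ k : S, cond (p b (d k)) (τ k)) ∧ (if b then s < G (p b) else G (p b) < r) := by
      intro τ
      let W : Set (ℕ → ℝ) := ⋂ k : S, {v | cond (v k) (τ k)}
      have hWo : IsOpen W := by
        refine isOpen_iInter_of_finite fun k => ?_
        cases hk : τ k
        · simpa [cond, hk] using isOpen_lt (continuous_apply (k : ℕ)) continuous_const
        · simpa [cond, hk] using isOpen_lt continuous_const (continuous_apply (k : ℕ))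
      have hWn : ∃ f ∈ L, (fun n => f (d n)) ∈ W := by
        obtain ⟨f, hf, hf2⟩ := hS (fun k => if h : k ∈ S then τ ⟨k, h⟩ else false)
        refine ⟨f, hf, ?_⟩
        simp only [W, mem_iInter, mem_ofPred_eq]
        intro k
        simpa using hf2 k k.2
      obtain ⟨⟨f, hf, hf1, hf2⟩, ⟨g, hg, hg1, hg2⟩⟩ := H W hWo hWn
      simp only [W, mem_iInter, mem_ofPred_eq] at hf1 hg1
      refine ⟨fun b => if b then g else f, ?_⟩
      intro b
      cases b
      · exact ⟨hf, hf1, by simpa using hf2⟩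
      · exact ⟨hg, hg1, by simpa using hg2⟩
    choose p hp using hW
    obtain ⟨k, hk1, hk2⟩ := aux_helly (fun i : (S → Bool) × Bool => p i.1 i.2)
      (fun i => G (p i.1 i.2)) (‖G‖ + 1) (by positivity) (by
        intro a
        have : ∑ i, a i * G (p i.1 i.2) = G (∑ i, a i • p i.1 i.2) := by simp
        rw [this]
        refine (le_abs_self _).trans ((G.le_opNorm _).trans ?_)
        exact mul_le_mul_of_nonneg_right (by linarith) (norm_nonneg _)) δ hδ0
    have hk3 : ∀ τ b, cond (p τ b (d k)) b := by
      intro τ b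
      have h1 := hk2 (τ, b)
      have h2 := (hp τ b).2.2
      rw [abs_lt] at h1
      cases b <;> simp only [cond, if_true, Bool.false_eq_true, if_false] at h1 h2 ⊢ <;> linarith
    refine ⟨k, hk1, ?_, ?_⟩
    · intro hkS
      have h1 := (hp (fun _ => true) false).2.1 ⟨k, hkS⟩
      have := hcond _ _ _ h1 (hk3 _ _)
      simp at this
    · intro σ
      refine ⟨p (fun k => σ k) (σ k), (hp _ _).1, ?_⟩
      intro j hj
      rcases Finset.mem_insert.1 hj with rfl | hj
      · exact hk3 _ _
      · exact (hp (fun k => σ k) (σ k)).2.1 ⟨j, hj⟩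
  choose! next hn1 hn2 hn3 using step
  let S : ℕ → Finset ℕ := fun n => Nat.rec ∅ (fun _ S => insert (next S) S) n
  have hS0 : S 0 = ∅ := rfl
  have hSs : ∀ n, S (n + 1) = insert (next (S n)) (S n) := fun n => rfl
  have hP : ∀ n, P (S n) := by
    intro n
    induction n with
    | zero =>
      intro σ
      obtain ⟨f, hf⟩ := hne
      exact ⟨f, hf, by simp [hS0]⟩
    | succ n ih => rw [hSs]; exact hn3 _ ih
  have hmono : Monotone S := monotone_nat_of_le_succ fun n => by
    rw [hSs]; exact Finset.subset_insert _ _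
  let x : ℕ → ℕ := fun n => next (S n)
  have hxm : ∀ i j, i < j → x i ∈ S j := by
    intro i j hij
    exact hmono (Nat.succ_le_of_lt hij) (by rw [Nat.succ_eq_add_one, hSs]; exact Finset.mem_insert_self _ _)
  have hxinj : Function.Injective x := by
    intro i j hij
    rcases lt_trichotomy i j with h | h | h
    · exact absurd ((show x i = next (S j) from hij) ▸ hxm i j h) (hn2 _ (hP j))
    · exact h
    · exact absurd ((show x j = next (S i) from hij.symm) ▸ hxm j i h) (hn2 _ (hP i))
  have hind : ∀ n (σ : ℕ → Bool), ∃ f ∈ L, ∀ i ∈ Finset.range n, cond (f (d (x i))) (σ i) := by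
    intro n σ
    obtain ⟨f, hf, hf2⟩ := hP n (fun k => σ (Function.invFun x k))
    refine ⟨f, hf, fun i hi => ?_⟩
    have := hf2 _ (hxm i n (Finset.mem_range.1 hi))
    rwa [Function.leftInverse_invFun hxinj] at this
  refine aux_l1 (fun n => d (x n)) (‖G‖ + 1 + 1) (δ / 2) (by positivity)
    (fun n => hn1 _ (hP n)) ?_
  intro n a
  obtain ⟨f, hf, hf2⟩ := hind n (fun i => decide (0 ≤ a i))
  obtain ⟨g, hg, hg2⟩ := hind n (fun i => !decide (0 ≤ a i))
  have h1 : δ * ∑ i ∈ Finset.range n, |a i| ≤ (f - g) (∑ i ∈ Finset.range n, a i • d (x i)) := by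
    rw [map_sum, Finset.mul_sum]
    refine Finset.sum_le_sum fun i hi => ?_
    have e1 := hf2 i hi
    have e2 := hg2 i hi
    simp only [map_smul, smul_eq_mul, sub_apply]
    by_cases ha : 0 ≤ a i
    · simp [cond, ha] at e1 e2
      rw [abs_of_nonneg ha]
      have : δ ≤ f (d (x i)) - g (d (x i)) := by linarith
      nlinarith
    · simp [cond, ha] at e1 e2
      rw [abs_of_neg (not_le.1 ha)]
      have : f (d (x i)) - g (d (x i)) ≤ - δ := by linarith
      nlinarith
  have h2 : ‖f - g‖ ≤ 2 := (norm_sub_le _ _).trans (by linarith [hL f hf, hL g hg])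
  have h3 := (le_abs_self _).trans ((f - g).le_opNorm (∑ i ∈ Finset.range n, a i • d (x i)))
  have h4 := mul_le_mul_of_nonneg_right h2 (norm_nonneg (∑ i ∈ Finset.range n, a i • d (x i)))
  linarith

theorem aux_sep {Y : Type*} [NormedAddCommGroup Y] [NormedSpace ℝ Y] [CompleteSpace Y]
    [SeparableSpace Y]
    (hl1 : ¬ ∃ S : Submodule ℝ Y, IsClosed (S : Set Y) ∧
      Nonempty (lp (fun _ : ℕ => ℝ) 1 ≃L[ℝ] S))
    (m : MeasurableSpace {f : Y →L[ℝ] ℝ // ‖f‖ ≤ 1})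
    (hm : m = MeasurableSpace.comap
      (fun (f : {f : Y →L[ℝ] ℝ // ‖f‖ ≤ 1}) (n : ℕ) => f.1 (denseSeq Y n)) MeasurableSpace.pi)
    (G : (Y →L[ℝ] ℝ) →L[ℝ] ℝ) (r s : ℝ) (hrs : r < s) :
    ∃ C : Set {f : Y →L[ℝ] ℝ // ‖f‖ ≤ 1}, MeasurableSet[m] C ∧ (∀ f ∈ C, G f.1 ≤ s) ∧
      ∀ f : {f : Y →L[ℝ] ℝ // ‖f‖ ≤ 1}, G f.1 < r → f ∈ C := by
  let e : {f : Y →L[ℝ] ℝ // ‖f‖ ≤ 1} → (ℕ → ℝ) := fun f n => f.1 (denseSeq Y n)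
  have hem : ∀ W : Set (ℕ → ℝ), IsOpen W → MeasurableSet[m] (e ⁻¹' W) := by
    intro W hW
    rw [hm]
    exact ⟨W, hW.measurableSet, rfl⟩
  let Good : Set (Set (ℕ → ℝ)) := {W | IsOpen W ∧
    ∃ C : Set {f : Y →L[ℝ] ℝ // ‖f‖ ≤ 1}, MeasurableSet[m] C ∧ (∀ f ∈ C, G f.1 ≤ s) ∧
      ∀ f, e f ∈ W → G f.1 < r → f ∈ C}
  obtain ⟨T, hTc, hTG, hTU⟩ := isOpen_sUnion_countable Good (fun W hW => hW.1)
  set U := ⋃₀ Good with hU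
  have hUo : IsOpen U := isOpen_sUnion fun W hW => hW.1
  have hUG : ∃ C : Set {f : Y →L[ℝ] ℝ // ‖f‖ ≤ 1}, MeasurableSet[m] C ∧ (∀ f ∈ C, G f.1 ≤ s) ∧
      ∀ f, e f ∈ U → G f.1 < r → f ∈ C := by
    choose! C hC1 hC2 hC3 using fun W (hW : W ∈ Good) => hW.2
    refine ⟨⋃ W ∈ T, C W, ?_, ?_, ?_⟩
    · exact MeasurableSet.biUnion hTc fun W hW => hC1 W (hTG hW)
    · intro f hf
      simp only [mem_iUnion] at hf
      obtain ⟨W, hW, hf⟩ := hf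
      exact hC2 W (hTG hW) f hf
    · intro f hf hfr
      rw [← hTU] at hf
      obtain ⟨W, hW, hfW⟩ := hf
      simp only [mem_iUnion]
      exact ⟨W, hW, hC3 W (hTG hW) f hfW hfr⟩
  obtain ⟨C, hC1, hC2, hC3⟩ := hUG
  by_cases hall : ∀ f, e f ∈ U
  · exact ⟨C, hC1, hC2, fun f hf => hC3 f (hall f) hf⟩
  · exfalso
    push Not at hall
    obtain ⟨f0, hf0⟩ := hall
    obtain ⟨W, hWo, ⟨f1, hf1, hf1W⟩, hW⟩ := aux_indep hl1 G r s hrs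
      {f | ∃ h : ‖f‖ ≤ 1, e ⟨f, h⟩ ∉ U} (fun f hf => hf.1) ⟨f0.1, f0.2, hf0⟩
    obtain ⟨hf1n, hf1U⟩ := hf1
    apply hf1U
    refine ⟨W ∪ U, ⟨hWo.union hUo, ?_⟩, Or.inl hf1W⟩
    rcases hW with hW | hW
    · refine ⟨C, hC1, hC2, fun f hf hfr => ?_⟩
      by_cases hfU : e f ∈ U
      · exact hC3 f hfU hfr
      · rcases hf with hf | hf
        · exact absurd hfr (not_lt.2 (hW f.1 ⟨f.2, hfU⟩ hf))
        · exact absurd hf hfU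
    · refine ⟨C ∪ (e ⁻¹' W \ e ⁻¹' U), hC1.union ((hem W hWo).diff (hem U hUo)), ?_, ?_⟩
      · rintro f (hf | hf)
        · exact hC2 f hf
        · exact hW f.1 ⟨f.2, hf.2⟩ hf.1
      · intro f hf hfr
        by_cases hfU : e f ∈ U
        · exact Or.inl (hC3 f hfU hfr)
        · rcases hf with hf | hf
          · exact Or.inr ⟨hf, hfU⟩
          · exact absurd hf hfU

theorem aux_meas {Y : Type*} [NormedAddCommGroup Y] [NormedSpace ℝ Y] [CompleteSpace Y]
    [SeparableSpace Y]
    (hl1 : ¬ ∃ S : Submodule ℝ Y, IsClosed (S : Set Y) ∧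
      Nonempty (lp (fun _ : ℕ => ℝ) 1 ≃L[ℝ] S))
    (m : MeasurableSpace {f : Y →L[ℝ] ℝ // ‖f‖ ≤ 1})
    (hm : m = MeasurableSpace.comap
      (fun (f : {f : Y →L[ℝ] ℝ // ‖f‖ ≤ 1}) (n : ℕ) => f.1 (denseSeq Y n)) MeasurableSpace.pi)
    (G : (Y →L[ℝ] ℝ) →L[ℝ] ℝ) :
    Measurable[m] (fun f : {f : Y →L[ℝ] ℝ // ‖f‖ ≤ 1} => G f.1) := by
  refine measurable_of_Iio fun a => ?_
  have h : ∀ n : ℕ, a - 2 * (1 / ((n : ℝ) + 1)) < a - 1 / ((n : ℝ) + 1) := by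
    intro n
    have : (0 : ℝ) < 1 / ((n : ℝ) + 1) := by positivity
    linarith
  choose C hC1 hC2 hC3 using fun n : ℕ => aux_sep hl1 m hm G _ _ (h n)
  have : (fun f : {f : Y →L[ℝ] ℝ // ‖f‖ ≤ 1} => G f.1) ⁻¹' Iio a = ⋃ n, C n := by
    ext f
    simp only [mem_preimage, mem_Iio, mem_iUnion]
    constructor
    · intro hf
      obtain ⟨n, hn⟩ := exists_nat_one_div_lt (show 0 < (a - G f.1) / 2 by linarith)
      exact ⟨n, hC3 n f (by linarith)⟩
    · rintro ⟨n, hn⟩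
      have : (0 : ℝ) < 1 / ((n : ℝ) + 1) := by positivity
      linarith [hC2 n f hn]
  rw [this]
  exact MeasurableSet.iUnion hC1

theorem aux_baw {Y : Type*} [NormedAddCommGroup Y] [NormedSpace ℝ Y] [CompleteSpace Y]
    [SeparableSpace Y]
    (hl1 : ¬ ∃ S : Submodule ℝ Y, IsClosed (S : Set Y) ∧
      Nonempty (lp (fun _ : ℕ => ℝ) 1 ≃L[ℝ] S))
    (m : MeasurableSpace {f : Y →L[ℝ] ℝ // ‖f‖ ≤ 1})
    (hm : m = MeasurableSpace.comap
      (fun (f : {f : Y →L[ℝ] ℝ // ‖f‖ ≤ 1}) (n : ℕ) => f.1 (denseSeq Y n)) MeasurableSpace.pi)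
    (N : (Y →L[ℝ] ℝ) → ℝ) (hN : @Measurable _ ℝ (BaW (Y →L[ℝ] ℝ)) Real.measurableSpace N) :
    Measurable[m] (fun f : {f : Y →L[ℝ] ℝ // ‖f‖ ≤ 1} => N f.1) := by
  have h1 : @Measurable _ _ m (BaW (Y →L[ℝ] ℝ))
      (fun f : {f : Y →L[ℝ] ℝ // ‖f‖ ≤ 1} => f.1) := by
    rw [measurable_iff_comap_le, BaW, MeasurableSpace.comap_iSup]
    refine iSup_le fun φ => ?_
    rw [MeasurableSpace.comap_comp, ← measurable_iff_comap_le]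
    exact aux_meas hl1 m hm φ
  exact @Measurable.comp _ _ _ m (BaW (Y →L[ℝ] ℝ)) _ _ _ hN h1

theorem aux_card {K : Type*} (m : MeasurableSpace K) [h : MeasurableSpace.CountablyGenerated K]
    (F : Set (ℕ → Bool) → Set K) (hF : Function.Injective F)
    (hm : ∀ A, MeasurableSet (F A)) : False := by
  obtain ⟨b, hb, rfl⟩ := h.isCountablyGenerated
  have h1 := MeasurableSpace.cardinal_measurableSet_le_continuum (s := b)
    ((Cardinal.le_aleph0_iff_set_countable.2 hb).trans Cardinal.aleph0_le_continuum)
  have h2 := Cardinal.lift_mk_le_lift_mk_of_injective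
    (f := fun A => (⟨F A, hm A⟩ : {t | @MeasurableSet K (MeasurableSpace.generateFrom b) t}))
    (fun A B hAB => hF (Subtype.ext_iff.1 hAB))
  have h3 := h2.trans (Cardinal.lift_le.2 h1)
  simp at h3
  exact absurd h3 (not_le.2 (by simpa using Cardinal.cantor Cardinal.continuum))

theorem aux_easy {X : Type*} [NormedAddCommGroup X] [NormedSpace ℝ X] [SeparableSpace X]
    (N : X → ℝ) (hN : IsEquivNorm N) :
    @Measurable _ ℝ (BaW X) Real.measurableSpace N := by
  obtain ⟨h1, h2, c, C, hc, hC, h3⟩ := hN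
  letI : MeasurableSpace X := BaW X
  have hφ : ∀ φ : X →L[ℝ] ℝ, Measurable φ := fun φ =>
    measurable_iff_comap_le.2 (le_iSup (fun φ : X →L[ℝ] ℝ =>
      MeasurableSpace.comap φ Real.measurableSpace) φ)
  let d := denseSeq X
  have hdual : ∀ x : X, ∃ g : X →L[ℝ] ℝ, ‖g‖ ≤ 1 ∧ g x = ‖x‖ := fun x => by
    simpa using exists_dual_vector'' ℝ x
  choose g hg1 hg2 using hdual
  have hnorm : ∀ a : X, Measurable fun x => ‖x - a‖ := by
    intro a
    refine measurable_of_Iic fun r => ?_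
    have : (fun x => ‖x - a‖) ⁻¹' Iic r = ⋂ n, {x | g (d n) x - g (d n) a ≤ r} := by
      ext x
      simp only [mem_preimage, mem_Iic, mem_iInter, mem_ofPred_eq]
      constructor
      · intro hx n
        rw [← map_sub]
        refine (le_abs_self _).trans (((g (d n)).le_opNorm _).trans ?_)
        nlinarith [hg1 (d n), norm_nonneg (x - a)]
      · intro hx
        refine le_of_forall_pos_le_add fun ε hε => ?_
        obtain ⟨n, hn⟩ := (denseRange_denseSeq X).exists_dist_lt (x - a) (half_pos hε)
        have e1 := hx n
        rw [← map_sub] at e1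
        have e2 := (le_abs_self _).trans ((g (d n)).le_opNorm (d n - (x - a)))
        rw [map_sub, hg2] at e2
        rw [dist_eq_norm] at hn
        have e3 : ‖x - a‖ ≤ ‖d n‖ + ‖x - a - d n‖ := by
          have := norm_add_le (d n) (x - a - d n)
          simpa using this
        have e4 : ‖d n - (x - a)‖ < ε / 2 := by rw [norm_sub_rev]; exact hn
        have e5 : ‖x - a - d n‖ < ε / 2 := hn
        nlinarith [hg1 (d n), norm_nonneg (d n - (x - a))]
    rw [this]
    refine MeasurableSet.iInter fun n => ?_
    exact measurableSet_le ((hφ _).sub_const _) measurable_const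
  have hlip : ∀ x y, N x ≤ N y + C * ‖x - y‖ := by
    intro x y
    have e1 := h1 y (x - y)
    have e2 := (h3 (x - y)).2
    rw [add_sub_cancel] at e1
    linarith
  refine measurable_of_Iio fun a => ?_
  have : N ⁻¹' Iio a = ⋃ n, {x | N (d n) + C * ‖x - d n‖ < a} := by
    ext x
    simp only [mem_preimage, mem_Iio, mem_iUnion, mem_ofPred_eq]
    constructor
    · intro hx
      obtain ⟨n, hn⟩ := (denseRange_denseSeq X).exists_dist_lt x
        (show 0 < (a - N x) / (2 * C) from div_pos (by linarith) (by linarith))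
      rw [dist_eq_norm, lt_div_iff₀ (by positivity)] at hn
      have e1 := hlip (d n) x
      rw [norm_sub_rev] at e1
      exact ⟨n, by linarith⟩
    · rintro ⟨n, hn⟩
      exact (hlip x (d n)).trans_lt hn
  rw [this]
  refine MeasurableSet.iUnion fun n => ?_
  exact measurableSet_lt (((hnorm _).const_mul _).const_add _) measurable_const

theorem aux_big {Y : Type*} [NormedAddCommGroup Y] [NormedSpace ℝ Y] [SeparableSpace Y]
    (hns : ¬ SeparableSpace (Y →L[ℝ] ℝ)) :
    ∃ A : Set (Y →L[ℝ] ℝ), A.Nonempty ∧ (∀ f ∈ A, ‖f‖ ≤ 1) ∧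
      ∀ W : Set (ℕ → ℝ), IsOpen W → (∃ f ∈ A, (fun n => f (denseSeq Y n)) ∈ W) →
        ∀ F : Set (Y →L[ℝ] ℝ), F.Countable → ∃ f ∈ A, (fun n => f (denseSeq Y n)) ∈ W ∧
          ∀ z ∈ Submodule.span ℝ F, 1 / 2 ≤ ‖f - z‖ := by
  let e : (Y →L[ℝ] ℝ) → (ℕ → ℝ) := fun f n => f (denseSeq Y n)
  let Good : Set (Set (ℕ → ℝ)) := {W | IsOpen W ∧ ∃ F : Set (Y →L[ℝ] ℝ), F.Countable ∧
    ∀ f, ‖f‖ ≤ 1 → e f ∈ W → ∃ z ∈ Submodule.span ℝ F, ‖f - z‖ < 1 / 2}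
  obtain ⟨T, hTc, hTG, hTU⟩ := isOpen_sUnion_countable Good (fun W hW => hW.1)
  set U := ⋃₀ Good with hU
  have hUo : IsOpen U := isOpen_sUnion fun W hW => hW.1
  have hUG : ∃ F : Set (Y →L[ℝ] ℝ), F.Countable ∧
      ∀ f, ‖f‖ ≤ 1 → e f ∈ U → ∃ z ∈ Submodule.span ℝ F, ‖f - z‖ < 1 / 2 := by
    choose! F hF1 hF2 using fun W (hW : W ∈ Good) => hW.2
    refine ⟨⋃ W ∈ T, F W, hTc.biUnion fun W hW => hF1 W (hTG hW), ?_⟩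
    intro f hf hfU
    rw [← hTU] at hfU
    obtain ⟨W, hW, hfW⟩ := hfU
    obtain ⟨z, hz, hz2⟩ := hF2 W (hTG hW) f hf hfW
    exact ⟨z, Submodule.span_mono (subset_biUnion_of_mem (u := F) hW) hz, hz2⟩
  obtain ⟨F, hF1, hF2⟩ := hUG
  refine ⟨{f | ‖f‖ ≤ 1 ∧ e f ∉ U}, ?_, fun f hf => hf.1, ?_⟩
  · by_contra hemp
    rw [not_nonempty_iff_eq_empty] at hemp
    have hall : ∀ f, ‖f‖ ≤ 1 → ∃ z ∈ Submodule.span ℝ F, ‖f - z‖ < 1 / 2 := by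
      intro f hf
      refine hF2 f hf ?_
      by_contra hfU
      have : f ∈ ({f | ‖f‖ ≤ 1 ∧ e f ∉ U} : Set (Y →L[ℝ] ℝ)) := ⟨hf, hfU⟩
      rw [hemp] at this
      exact this
    apply hns
    have hsep : IsSeparable ((Submodule.span ℝ F).topologicalClosure : Set (Y →L[ℝ] ℝ)) := by
      rw [Submodule.topologicalClosure_coe]
      exact (hF1.isSeparable.span (R := ℝ)).closure
    have htop : ∀ x, x ∈ (Submodule.span ℝ F).topologicalClosure := by
      by_contra! hx
      obtain ⟨x0, hx0, hx1⟩ := riesz_lemma (Submodule.isClosed_topologicalClosure _) hx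
        (show (1 / 2 : ℝ) < 1 by norm_num)
      have hx00 : x0 ≠ 0 := by
        rintro rfl
        exact hx0 (Submodule.zero_mem _)
      have hpos : 0 < ‖x0‖ := norm_pos_iff.2 hx00
      obtain ⟨z, hz, hz2⟩ := hall (‖x0‖⁻¹ • x0) (by
        rw [norm_smul, norm_inv, norm_norm, inv_mul_cancel₀ hpos.ne'])
      have h1 := hx1 (‖x0‖ • z) (Submodule.smul_mem _ _ (Submodule.le_topologicalClosure _ hz))
      have h2 : x0 - ‖x0‖ • z = ‖x0‖ • (‖x0‖⁻¹ • x0 - z) := by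
        rw [smul_sub, smul_inv_smul₀ hpos.ne']
      rw [h2, norm_smul, norm_norm] at h1
      nlinarith
    rw [← isSeparable_univ_iff]
    exact hsep.mono fun x _ => htop x
  · intro W hWo ⟨f, hf, hfW⟩ F' hF'
    by_contra! hcon
    apply hf.2
    refine ⟨W, ⟨hWo, F ∪ F', hF1.union hF', ?_⟩, hfW⟩
    intro g hg hgW
    by_cases hgU : e g ∈ U
    · obtain ⟨z, hz, hz2⟩ := hF2 g hg hgU
      exact ⟨z, Submodule.span_mono subset_union_left hz, hz2⟩
    · obtain ⟨z, hz, hz2⟩ := hcon g ⟨hg, hgU⟩ hgW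
      exact ⟨z, Submodule.span_mono subset_union_right hz, hz2⟩

theorem aux_step1 {Y : Type*} [NormedAddCommGroup Y] [NormedSpace ℝ Y] [SeparableSpace Y]
    (A : Set (Y →L[ℝ] ℝ))
    (hA : ∀ W : Set (ℕ → ℝ), IsOpen W → (∃ f ∈ A, (fun n => f (denseSeq Y n)) ∈ W) →
        ∀ F : Set (Y →L[ℝ] ℝ), F.Countable → ∃ f ∈ A, (fun n => f (denseSeq Y n)) ∈ W ∧
          ∀ z ∈ Submodule.span ℝ F, 1 / 2 ≤ ‖f - z‖)
    {ι : Type*} [Fintype ι] (U : ι → Set (ℕ → ℝ)) (hU : ∀ i, IsOpen (U i))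
    (hUA : ∀ i, ∃ f ∈ A, (fun n => f (denseSeq Y n)) ∈ U i) (i₀ : ι) :
    ∃ (k : ℕ) (V : ι → Set (ℕ → ℝ)), ‖denseSeq Y k‖ ≤ 3 ∧ (∀ i, IsOpen (V i)) ∧
      (∀ i, ∃ f ∈ A, (fun n => f (denseSeq Y n)) ∈ V i) ∧ (∀ i, V i ⊆ U i) ∧
      (∀ v ∈ V i₀, 3 / 4 < v k) ∧ ∀ j, j ≠ i₀ → ∀ v ∈ V j, |v k| < 1 / 4 := by
  classical
  choose g hgA hgU using hUA
  obtain ⟨f, hfA, hfU, hf⟩ := hA (U i₀) (hU i₀) ⟨g i₀, hgA i₀, hgU i₀⟩ (range g)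
    (countable_range g)
  let p : ι → Y →L[ℝ] ℝ := Function.update g i₀ f
  have hp0 : p i₀ = f := by simp [p]
  have hpj : ∀ j, j ≠ i₀ → p j = g j := fun j hj => by simp [p, hj]
  obtain ⟨k, hk, hk2⟩ := aux_helly p (Pi.single i₀ 1) 2 (by norm_num) (by
    intro a
    have h1 : ∑ i, a i * (Pi.single i₀ (1 : ℝ) : ι → ℝ) i = a i₀ := by
      simp [Pi.single_apply]
    rw [h1]
    have h2 : ∑ i, a i • p i = a i₀ • f + ∑ i ∈ Finset.univ.erase i₀, a i • g i := by
      rw [← Finset.add_sum_erase _ _ (Finset.mem_univ i₀), hp0]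
      congr 1
      refine Finset.sum_congr rfl fun j hj => ?_
      rw [hpj j (Finset.ne_of_mem_erase hj)]
    rw [h2]
    set z := ∑ i ∈ Finset.univ.erase i₀, a i • g i with hz
    have hzs : z ∈ Submodule.span ℝ (range g) :=
      Submodule.sum_mem _ fun i _ => Submodule.smul_mem _ _ (Submodule.subset_span ⟨i, rfl⟩)
    by_cases ha : a i₀ = 0
    · rw [ha]; positivity
    · have h3 := hf (-((a i₀)⁻¹ • z)) (Submodule.neg_mem _ (Submodule.smul_mem _ _ hzs))
      have h4 : a i₀ • f + z = a i₀ • (f - -((a i₀)⁻¹ • z)) := by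
        rw [sub_neg_eq_add, smul_add, smul_inv_smul₀ ha]
      rw [h4, norm_smul, Real.norm_eq_abs]
      nlinarith [le_abs_self (a i₀), abs_nonneg (a i₀)]) (1 / 4) (by norm_num)
  have hpA : ∀ i, p i ∈ A ∧ (fun n => p i (denseSeq Y n)) ∈ U i := by
    intro i
    by_cases hi : i = i₀
    · subst hi; rw [hp0]; exact ⟨hfA, hfU⟩
    · rw [hpj i hi]; exact ⟨hgA i, hgU i⟩
  refine ⟨k, fun i => if i = i₀ then U i ∩ {v | 3 / 4 < v k} else U i ∩ {v | |v k| < 1 / 4},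
    by linarith, ?_, ?_, ?_, ?_, ?_⟩
  · intro i
    have h1 : IsOpen {v : ℕ → ℝ | 3 / 4 < v k} := isOpen_lt continuous_const (continuous_apply k)
    have h2 : IsOpen {v : ℕ → ℝ | |v k| < 1 / 4} :=
      isOpen_lt (continuous_apply k).abs continuous_const
    dsimp only
    split_ifs
    · exact (hU i).inter h1
    · exact (hU i).inter h2
  · intro i
    refine ⟨p i, (hpA i).1, ?_⟩
    have h1 := hk2 i
    dsimp only
    split_ifs with hi
    · subst hi
      refine ⟨(hpA i).2, ?_⟩
      rw [Pi.single_eq_same, abs_lt] at h1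
      simp only [mem_ofPred_eq]
      linarith
    · refine ⟨(hpA i).2, ?_⟩
      rw [Pi.single_eq_of_ne hi, sub_zero] at h1
      exact h1
  · intro i v hv
    dsimp only at hv
    split_ifs at hv
    · exact hv.1
    · exact hv.1
  · intro v hv
    simp only [if_true] at hv
    exact hv.2
  · intro j hj v hv
    simp only [hj, if_false] at hv
    exact hv.2

theorem aux_step {Y : Type*} [NormedAddCommGroup Y] [NormedSpace ℝ Y] [SeparableSpace Y]
    (A : Set (Y →L[ℝ] ℝ))
    (hA : ∀ W : Set (ℕ → ℝ), IsOpen W → (∃ f ∈ A, (fun n => f (denseSeq Y n)) ∈ W) →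
        ∀ F : Set (Y →L[ℝ] ℝ), F.Countable → ∃ f ∈ A, (fun n => f (denseSeq Y n)) ∈ W ∧
          ∀ z ∈ Submodule.span ℝ F, 1 / 2 ≤ ‖f - z‖)
    {ι : Type*} [Fintype ι] (U : ι → Set (ℕ → ℝ)) (hU : ∀ i, IsOpen (U i))
    (hUA : ∀ i, ∃ f ∈ A, (fun n => f (denseSeq Y n)) ∈ U i) (s : Finset ι) :
    ∃ (k : ι → ℕ) (V : ι → Set (ℕ → ℝ)), (∀ i, IsOpen (V i)) ∧
      (∀ i, ∃ f ∈ A, (fun n => f (denseSeq Y n)) ∈ V i) ∧ (∀ i, V i ⊆ U i) ∧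
      ∀ i ∈ s, ‖denseSeq Y (k i)‖ ≤ 3 ∧ (∀ v ∈ V i, 3 / 4 < v (k i)) ∧
        ∀ j, j ≠ i → ∀ v ∈ V j, |v (k i)| < 1 / 4 := by
  classical
  induction s using Finset.induction_on with
  | empty => exact ⟨fun _ => 0, U, hU, hUA, fun _ => Subset.rfl, by simp⟩
  | insert i₀ s hi ih =>
    obtain ⟨k, V, h1, h2, h3, h4⟩ := ih
    obtain ⟨k', V', g0, g1, g2, g3, g4, g5⟩ := aux_step1 A hA V h1 h2 i₀
    refine ⟨Function.update k i₀ k', V', g1, g2, fun i => (g3 i).trans (h3 i), ?_⟩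
    intro i hi'
    by_cases hii : i = i₀
    · subst hii
      simp only [Function.update_self]
      exact ⟨g0, g4, g5⟩
    · have his : i ∈ s := (Finset.mem_insert.1 hi').resolve_left hii
      simp only [Function.update_of_ne hii]
      obtain ⟨q1, q2, q3⟩ := h4 i his
      exact ⟨q1, fun v hv => q2 v (g3 i hv), fun j hj v hv => q3 j hj v (g3 j hv)⟩

theorem aux_ultra {E : Type*} [NormedAddCommGroup E] [NormedSpace ℝ E] (u : ℕ → E →L[ℝ] ℝ) (M : ℝ)
    (hu : ∀ n, ‖u n‖ ≤ M) :
    ∃ φ : E →L[ℝ] ℝ, ‖φ‖ ≤ M ∧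
      ∀ x, Tendsto (fun n => u n x) (hyperfilter ℕ : Filter ℕ) (𝓝 (φ x)) := by
  have hc := WeakDual.isCompact_closedBall (𝕜 := ℝ) (0 : StrongDual ℝ E) M
  obtain ⟨φ, hφ, hφ2⟩ := hc.ultrafilter_le_nhds'
    ((hyperfilter ℕ).map fun n => StrongDual.toWeakDual (u n)) (by
      rw [Ultrafilter.mem_map]
      refine Filter.univ_mem' fun n => ?_
      simpa using hu n)
  refine ⟨WeakDual.toStrongDual φ, by simpa using hφ, fun x => ?_⟩
  have h1 : Tendsto (fun n => StrongDual.toWeakDual (u n)) (hyperfilter ℕ : Filter ℕ) (𝓝 φ) := hφ2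
  exact ((WeakDual.eval_continuous x).tendsto φ).comp h1

theorem aux_tree {Y : Type*} [NormedAddCommGroup Y] [NormedSpace ℝ Y] [SeparableSpace Y]
    (hns : ¬ SeparableSpace (Y →L[ℝ] ℝ)) :
    ∃ (y : (ℕ → Bool) → Y →L[ℝ] ℝ) (g : (ℕ → Bool) → (Y →L[ℝ] ℝ) →L[ℝ] ℝ),
      (∀ t, ‖y t‖ ≤ 1) ∧ (∀ t, ‖g t‖ ≤ 3) ∧ (∀ t, 3 / 4 ≤ g t (y t)) ∧
      ∀ t s, s ≠ t → |g t (y s)| ≤ 1 / 4 := by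
  classical
  obtain ⟨A, hAne, hA1, hA⟩ := aux_big hns
  let d := denseSeq Y
  let State : ℕ → Type := fun n => {V : (Fin n → Bool) → Set (ℕ → ℝ) //
    ∀ σ, IsOpen (V σ) ∧ ∃ f ∈ A, (fun n => f (d n)) ∈ V σ}
  have step : ∀ n (V : State n), ∃ (V' : State (n + 1)) (k : (Fin (n + 1) → Bool) → ℕ),
      (∀ σ, V'.1 σ ⊆ V.1 (Fin.init σ)) ∧ ∀ σ, ‖d (k σ)‖ ≤ 3 ∧ (∀ v ∈ V'.1 σ, 3 / 4 < v (k σ)) ∧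
        ∀ τ, τ ≠ σ → ∀ v ∈ V'.1 τ, |v (k σ)| < 1 / 4 := by
    intro n V
    obtain ⟨k, V', h1, h2, h3, h4⟩ := aux_step A hA
      (fun σ : Fin (n + 1) → Bool => V.1 (Fin.init σ)) (fun σ => (V.2 _).1) (fun σ => (V.2 _).2)
      Finset.univ
    exact ⟨⟨V', fun σ => ⟨h1 σ, h2 σ⟩⟩, k, h3, fun σ => h4 σ (Finset.mem_univ _)⟩
  choose next k hk1 hk2 using step
  let V : ∀ n, State n := fun n => Nat.rec
    (⟨fun _ => univ, fun _ => ⟨isOpen_univ, hAne.some, hAne.some_mem, mem_univ _⟩⟩ : State 0)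
    (fun n W => next n W) n
  have hV : ∀ n, V (n + 1) = next n (V n) := fun n => rfl
  let res : (ℕ → Bool) → ∀ n, Fin n → Bool := fun t n i => t i
  have hres : ∀ t n, Fin.init (res t (n + 1)) = res t n := fun t n => rfl
  have hanti : ∀ t, Antitone fun n => (V n).1 (res t n) := by
    intro t
    refine antitone_nat_of_succ_le fun n => ?_
    have := hk1 n (V n) (res t (n + 1))
    rw [hres] at this
    exact this
  choose p hpA hpV using fun t n => ((V n).2 (res t n)).2
  let κ : (ℕ → Bool) → ℕ → ℕ := fun t n => k n (V n) (res t (n + 1))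
  have q1 : ∀ t n, ‖d (κ t n)‖ ≤ 3 := fun t n => (hk2 n (V n) _).1
  have q2 : ∀ t n m, n + 1 ≤ m → 3 / 4 < p t m (d (κ t n)) := fun t n m hm =>
    (hk2 n (V n) _).2.1 _ (hanti t hm (hpV t m))
  have q3 : ∀ t s n m, n + 1 ≤ m → res s (n + 1) ≠ res t (n + 1) → |p s m (d (κ t n))| < 1 / 4 :=
    fun t s n m hm hst => (hk2 n (V n) _).2.2 _ hst _ (hanti s hm (hpV s m))
  choose y hy1 hy2 using fun t => aux_ultra (p t) 1 (fun n => hA1 _ (hpA t n))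
  choose g hg1 hg2 using fun t => aux_ultra
    (fun n => ContinuousLinearMap.apply ℝ ℝ (d (κ t n))) 3 (fun n => by
      refine ContinuousLinearMap.opNorm_le_bound _ (by norm_num) fun f => ?_
      rw [ContinuousLinearMap.apply_apply]
      refine (f.le_opNorm _).trans ?_
      rw [mul_comm]
      exact mul_le_mul_of_nonneg_right (q1 t n) (norm_nonneg _))
  have hge : ∀ N : ℕ, ∀ᶠ m in (hyperfilter ℕ : Filter ℕ), N ≤ m := fun N =>
    (Nat.hyperfilter_le_atTop) (eventually_ge_atTop N)
  refine ⟨y, g, hy1, hg1, ?_, ?_⟩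
  · intro t
    refine ge_of_tendsto (hg2 t (y t)) (Eventually.of_forall fun n => ?_)
    refine ge_of_tendsto (hy2 t (d (κ t n))) ?_
    filter_upwards [hge (n + 1)] with m hm
    exact (q2 t n m hm).le
  · intro t s hst
    obtain ⟨i, hi⟩ := Function.ne_iff.1 hst
    refine le_of_tendsto (hg2 t (y s)).abs ?_
    filter_upwards [hge i] with n hn
    refine le_of_tendsto (hy2 s (d (κ t n))).abs ?_
    filter_upwards [hge (n + 1)] with m hm
    refine (q3 t s n m hm fun heq => hi ?_).le
    exact congrFun heq ⟨i, by omega⟩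

theorem aux_norm {X : Type*} [NormedAddCommGroup X] [NormedSpace ℝ X] {T : Type*} [Nonempty T]
    (y : T → X) (g : T → X →L[ℝ] ℝ) (hy : ∀ t, ‖y t‖ ≤ 1) (hg : ∀ t, ‖g t‖ ≤ 3)
    (h1 : ∀ t, 3 / 4 ≤ g t (y t)) (h2 : ∀ t s, s ≠ t → |g t (y s)| ≤ 1 / 4) (A : Set T) :
    ∃ N : X → ℝ, IsEquivNorm N ∧ ∀ t, 5 / 8 < N (y t) ↔ t ∈ A := by
  classical
  let c : T → ℝ := fun t => if t ∈ A then 1 else 0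
  have hc0 : ∀ t, 0 ≤ c t := fun t => by simp only [c]; split_ifs <;> norm_num
  have hc1 : ∀ t, c t ≤ 1 := fun t => by simp only [c]; split_ifs <;> norm_num
  let q : T → X → ℝ := fun t x => max (‖x‖ / 2) (c t * |g t x|)
  have hq3 : ∀ t x, q t x ≤ 3 * ‖x‖ := by
    intro t x
    refine max_le (by linarith [norm_nonneg x]) ?_
    have e1 : |g t x| ≤ 3 * ‖x‖ :=
      ((g t).le_opNorm x).trans (mul_le_mul_of_nonneg_right (hg t) (norm_nonneg _))
    nlinarith [hc0 t, hc1 t, abs_nonneg (g t x)]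
  have hbdd : ∀ x, BddAbove (range fun t => q t x) := fun x =>
    ⟨3 * ‖x‖, by rintro _ ⟨t, rfl⟩; exact hq3 t x⟩
  refine ⟨fun x => ⨆ t, q t x, ⟨?_, ?_, 1 / 2, 3, by norm_num, by norm_num, ?_⟩, ?_⟩
  · intro x z
    refine ciSup_le fun t => ?_
    refine le_trans ?_ (add_le_add (le_ciSup (hbdd x) t) (le_ciSup (hbdd z) t))
    refine max_le ?_ ?_
    · have := norm_add_le x z
      linarith [le_max_left (‖x‖ / 2) (c t * |g t x|), le_max_left (‖z‖ / 2) (c t * |g t z|)]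
    · have e1 : |g t (x + z)| ≤ |g t x| + |g t z| := by rw [map_add]; exact abs_add_le _ _
      have e2 := mul_le_mul_of_nonneg_left e1 (hc0 t)
      linarith [le_max_right (‖x‖ / 2) (c t * |g t x|), le_max_right (‖z‖ / 2) (c t * |g t z|)]
  · intro a x
    rw [Real.mul_iSup_of_nonneg (abs_nonneg a)]
    refine iSup_congr fun t => ?_
    simp only [q]
    rw [mul_max_of_nonneg _ _ (abs_nonneg a), norm_smul, map_smul, smul_eq_mul, abs_mul,
      Real.norm_eq_abs]
    congr 1 <;> ring
  · intro x
    refine ⟨?_, ciSup_le fun t => hq3 t x⟩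
    refine le_trans ?_ (le_ciSup (hbdd x) (Classical.arbitrary T))
    exact le_trans (by linarith) (le_max_left _ _)
  · intro t
    constructor
    · intro ht
      by_contra htA
      refine absurd ht (not_lt.2 (ciSup_le fun s => max_le (by linarith [hy t]) ?_))
      by_cases hs : s = t
      · subst hs; simp only [c, htA, if_false]; norm_num
      · have := h2 s t (Ne.symm hs)
        nlinarith [hc0 s, hc1 s, abs_nonneg (g s (y t))]
    · intro ht
      refine lt_of_lt_of_le ?_ (le_ciSup (hbdd (y t)) t)
      refine lt_of_lt_of_le ?_ (le_max_right _ _)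
      simp only [c, ht, if_true, one_mul]
      linarith [h1 t, le_abs_self (g t (y t))]

/-- For a separable Banach space `Y` with no closed subspace isomorphic to `ℓ¹(ℕ)`,
the dual `Y*` is separable iff every equivalent norm on `Y*` is `Ba((Y*)_w)`-measurable. -/
theorem stmt9 (Y : Type*) [NormedAddCommGroup Y] [NormedSpace ℝ Y] [CompleteSpace Y]
    [TopologicalSpace.SeparableSpace Y]
    (hl1 : ¬ ∃ S : Submodule ℝ Y, IsClosed (S : Set Y) ∧
      Nonempty (lp (fun _ : ℕ => ℝ) 1 ≃L[ℝ] S)) :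
    TopologicalSpace.SeparableSpace (Y →L[ℝ] ℝ) ↔
      ∀ N : (Y →L[ℝ] ℝ) → ℝ, IsEquivNorm N →
        @Measurable _ ℝ (BaW (Y →L[ℝ] ℝ)) Real.measurableSpace N := by

  constructor
  · intro h N hN
    exact aux_easy N hN
  · intro H
    by_contra hns
    obtain ⟨y, g, hy, hg, h1, h2⟩ := aux_tree hns
    choose N hN hNA using aux_norm y g hy hg h1 h2
    let m : MeasurableSpace {f : Y →L[ℝ] ℝ // ‖f‖ ≤ 1} := MeasurableSpace.comap
      (fun (f : {f : Y →L[ℝ] ℝ // ‖f‖ ≤ 1}) (n : ℕ) => f.1 (denseSeq Y n)) MeasurableSpace.pi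
    have hcg : @MeasurableSpace.CountablyGenerated _ m := MeasurableSpace.CountablyGenerated.comap _
    refine @aux_card _ m hcg (fun A => {f | 5 / 8 < N A f.1}) ?_ ?_
    · intro A B hAB
      ext t
      rw [← hNA A t, ← hNA B t]
      exact Set.ext_iff.1 hAB ⟨y t, hy t⟩
    · intro A
      exact aux_baw hl1 m rfl (N A) (H _ (hN A)) measurableSet_Ioi
end

section
/- Let Γ be a set and let A be a set in the product σ-algebra P(Γ) ⊗ P(Γ) on Γ × Γ. Define an equivalence relation ≈ on Γ by: γ ≈ γ' if and only if for every δ ∈ Γ one has (δ,γ) ∈ A ⇔ (δ,γ') ∈ A and (γ,δ) ∈ A ⇔ (γ',δ) ∈ A. Then ≈ has at most 𝔠 (the cardinality of the continuum) many equivalence classes. -/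
/-- The σ-algebra on `Γ × Γ` generated by all rectangles `A ×ˢ B` with `A, B ⊆ Γ`. -/
def productSigma (Γ : Type*) : MeasurableSpace (Γ × Γ) :=
  MeasurableSpace.generateFrom {S : Set (Γ × Γ) | ∃ A B : Set Γ, S = A ×ˢ B}

/-- The equivalence relation `≈` on `Γ` induced by a set `A ⊆ Γ × Γ`:
`γ ≈ γ'` iff for every `δ`, `(δ,γ) ∈ A ↔ (δ,γ') ∈ A` and `(γ,δ) ∈ A ↔ (γ',δ) ∈ A`. -/
def approxSetoid (Γ : Type*) (A : Set (Γ × Γ)) : Setoid Γ where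
  r γ γ' := ∀ δ : Γ, (((δ, γ) ∈ A) ↔ ((δ, γ') ∈ A)) ∧ (((γ, δ) ∈ A) ↔ ((γ', δ) ∈ A))
  iseqv := by
    refine ⟨fun _ _ => ⟨Iff.rfl, Iff.rfl⟩, fun h δ => ⟨(h δ).1.symm, (h δ).2.symm⟩,
      fun h1 h2 δ => ⟨(h1 δ).1.trans (h2 δ).1, (h1 δ).2.trans (h2 δ).2⟩⟩

theorem stmt10_aux (Γ : Type*) (A : Set (Γ × Γ))
    (hA : @MeasurableSet _ (productSigma Γ) A) :
    ∃ f : Γ → Set ℕ, ∀ a a' b b', f a = f a' → f b = f b' → ((a, b) ∈ A ↔ (a', b') ∈ A) := by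
  induction A, hA using MeasurableSpace.generateFrom_induction with
  | hC t ht _ =>
    obtain ⟨S, T, rfl⟩ := ht
    refine ⟨fun a => {n | (n = 0 ∧ a ∈ S) ∨ (n = 1 ∧ a ∈ T)}, fun a a' b b' h1 h2 => ?_⟩
    have h3 := Set.ext_iff.1 h1 0
    have h4 := Set.ext_iff.1 h2 1
    simp at h3 h4
    simp [h3, h4]
  | empty => exact ⟨fun _ => ∅, by simp⟩
  | compl t _ ih =>
    obtain ⟨f, hf⟩ := ih
    exact ⟨f, fun a a' b b' h1 h2 => not_congr (hf a a' b b' h1 h2)⟩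
  | iUnion s _ ih =>
    choose f hf using ih
    refine ⟨fun a => {n | n.unpair.2 ∈ f n.unpair.1 a}, fun a a' b b' h1 h2 => ?_⟩
    have key : ∀ x y, {n : ℕ | n.unpair.2 ∈ f n.unpair.1 x} = {n | n.unpair.2 ∈ f n.unpair.1 y} →
        ∀ i, f i x = f i y := by
      intro x y h i
      ext m
      have := Set.ext_iff.1 h (Nat.pair i m)
      simpa using this
    simp only [Set.mem_iUnion]
    exact exists_congr fun i => hf i a a' b b' (key _ _ h1 i) (key _ _ h2 i)

/-- If `A` belongs to the product σ-algebra `P(Γ) ⊗ P(Γ)`, then the induced equivalence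
relation `≈` on `Γ` has at most `𝔠` many equivalence classes. -/
theorem stmt10 (Γ : Type*) (A : Set (Γ × Γ))
    (hA : @MeasurableSet _ (productSigma Γ) A) :
    Cardinal.mk (Quotient (approxSetoid Γ A)) ≤ Cardinal.continuum := by
  obtain ⟨f, hf⟩ := stmt10_aux Γ A hA
  have h : Function.Injective (fun q : Quotient (approxSetoid Γ A) => f q.out) := by
    intro p q hpq
    rw [← Quotient.out_eq p, ← Quotient.out_eq q]
    exact Quotient.sound fun δ => ⟨hf _ _ _ _ rfl hpq, hf _ _ _ _ hpq rfl⟩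
  have h2 := Cardinal.lift_mk_le_lift_mk_of_injective h
  simpa using h2
end

section
/- Let Γ be a set, let Ω = {(γ₁,γ₂) ∈ Γ × Γ : γ₁ ≠ γ₂} be the complement of the diagonal, and let Σ be the trace of the product σ-algebra P(Γ) ⊗ P(Γ) on Ω. Then |Γ| is a Kunen cardinal if and only if Σ equals the full power set of Ω. -/
/-- `|Γ|` is a Kunen cardinal. -/
def IsKunen (Γ : Type*) : Prop := productSigma Γ = ⊤

theorem kunen_aux {Γ : Type*} (A : Set (Γ × Γ)) (hA : @MeasurableSet _ (productSigma Γ) A) :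
    ∃ C : ℕ → Set Γ, ∀ x x' y y' : Γ, (∀ n, x ∈ C n ↔ x' ∈ C n) → (∀ n, y ∈ C n ↔ y' ∈ C n) →
      ((x, y) ∈ A ↔ (x', y') ∈ A) := by
  unfold productSigma at hA
  induction A, hA using MeasurableSpace.generateFrom_induction with
  | hC t ht _ =>
    obtain ⟨A, B, rfl⟩ := ht
    refine ⟨fun n => if n = 0 then A else B, fun x x' y y' hx hy => ?_⟩
    have h0 := hx 0
    have h1 := hy 1
    simp at h0 h1
    simp [h0, h1]
  | empty => exact ⟨fun _ => ∅, by simp⟩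
  | compl t _ ih =>
    obtain ⟨C, hC⟩ := ih
    exact ⟨C, fun x x' y y' hx hy => not_congr (hC x x' y y' hx hy)⟩
  | iUnion s _ ih =>
    choose C hC using ih
    refine ⟨fun n => C n.unpair.1 n.unpair.2, fun x x' y y' hx hy => ?_⟩
    simp only [Set.mem_iUnion]
    refine exists_congr fun i => hC i x x' y y' (fun n => ?_) (fun n => ?_)
    · simpa using hx (Nat.pair i n)
    · simpa using hy (Nat.pair i n)

/-- Let `Ω` be the complement of the diagonal in `Γ × Γ`. Then `|Γ|` is a Kunen cardinal
iff the trace of the product σ-algebra `P(Γ) ⊗ P(Γ)` on `Ω` is the full power set of `Ω`. -/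
theorem stmt11 (Γ : Type*) :
    IsKunen Γ ↔
      ∀ X ⊆ {p : Γ × Γ | p.1 ≠ p.2}, ∃ A : Set (Γ × Γ),
        @MeasurableSet _ (productSigma Γ) A ∧ A ∩ {p : Γ × Γ | p.1 ≠ p.2} = X := by
  constructor
  · intro h X hX
    refine ⟨X, ?_, Set.inter_eq_left.2 hX⟩
    rw [show productSigma Γ = ⊤ from h]
    trivial
  · intro h
    have rect : ∀ A B : Set Γ, @MeasurableSet _ (productSigma Γ) (A ×ˢ B) := fun A B =>
      MeasurableSpace.measurableSet_generateFrom ⟨A, B, rfl⟩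
    let r : Γ → Γ → Prop := WellOrderingRel
    obtain ⟨A, hA, hAX⟩ := h {p | r p.1 p.2} (by
      rintro ⟨a, b⟩ hab (rfl : a = b)
      exact irrefl_of (WellOrderingRel : Γ → Γ → Prop) a hab)
    obtain ⟨C, hC⟩ := kunen_aux A hA
    have sep : ∀ x y : Γ, r x y → ¬ ∀ n, x ∈ C n ↔ y ∈ C n := by
      intro x y hxy hn
      have h1 : (x, y) ∈ A ∩ {p : Γ × Γ | p.1 ≠ p.2} := by rw [hAX]; exact hxy
      have h2 : (y, x) ∈ A ∩ {p : Γ × Γ | p.1 ≠ p.2} :=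
        ⟨(hC x y y x hn (fun n => (hn n).symm)).1 h1.1, fun e => h1.2 e.symm⟩
      rw [hAX] at h2
      exact asymm_of (WellOrderingRel : Γ → Γ → Prop) hxy h2
    have sep' : ∀ x y : Γ, (∀ n, x ∈ C n ↔ y ∈ C n) → x = y := by
      intro x y hn
      rcases trichotomous_of (WellOrderingRel : Γ → Γ → Prop) x y with h1 | h1 | h1
      · exact absurd hn (sep x y h1)
      · exact h1
      · exact absurd (fun n => (hn n).symm) (sep y x h1)
    have hΩ : @MeasurableSet _ (productSigma Γ) {p : Γ × Γ | p.1 ≠ p.2} := by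
      have e : {p : Γ × Γ | p.1 ≠ p.2} = ⋃ n, (C n ×ˢ (C n)ᶜ ∪ (C n)ᶜ ×ˢ C n) := by
        ext ⟨x, y⟩
        simp only [Set.mem_setOf_eq, Set.mem_iUnion, Set.mem_union, Set.mem_prod, Set.mem_compl_iff]
        constructor
        · intro hne
          by_contra hcon
          push Not at hcon
          exact hne (sep' x y fun n => by have := hcon n; tauto)
        · rintro ⟨n, hn⟩ rfl
          tauto
      rw [e]
      exact MeasurableSet.iUnion fun n => (rect _ _).union (rect _ _)
    refine eq_top_iff.2 fun S _ => ?_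
    obtain ⟨B, hB, hBX⟩ := h (S ∩ {p : Γ × Γ | p.1 ≠ p.2}) Set.inter_subset_right
    have e : S = (B ∩ {p : Γ × Γ | p.1 ≠ p.2}) ∪
        (({x | (x, x) ∈ S} ×ˢ Set.univ) ∩ {p : Γ × Γ | p.1 ≠ p.2}ᶜ) := by
      rw [hBX]
      ext ⟨x, y⟩
      by_cases hxy : x = y
      · subst hxy; simp
      · simp [hxy]
    rw [e]
    exact (hB.inter hΩ).union ((rect _ _).inter hΩ.compl)
end

section
/- If Γ is a set of cardinality strictly greater than 𝔠 (the cardinality of the continuum), then |Γ| is not a Kunen cardinal, i.e. there exists a subset of Γ × Γ that does not belong to the product σ-algebra P(Γ) ⊗ P(Γ). -/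
/-- Every set in the product σ-algebra has sections determined by countably many sets. -/
lemma productSigma_aux (Γ : Type*) (S : Set (Γ × Γ)) (hS : @MeasurableSet _ (productSigma Γ) S) :
    ∃ C : ℕ → Set Γ, ∀ x y : Γ, (∀ n, x ∈ C n ↔ y ∈ C n) →
      ∀ z, ((x, z) ∈ S ↔ (y, z) ∈ S) := by
  unfold productSigma at hS
  induction S, hS using MeasurableSpace.generateFrom_induction with
  | hC t ht _ =>
    obtain ⟨A, B, rfl⟩ := ht
    refine ⟨fun _ => A, fun x y hxy z => ?_⟩
    have := hxy 0
    simp only [Set.mem_prod, this]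
  | empty => exact ⟨fun _ => ∅, by simp⟩
  | compl t _ ih =>
    obtain ⟨C, hC⟩ := ih
    exact ⟨C, fun x y hxy z => not_congr (hC x y hxy z)⟩
  | iUnion f _ ih =>
    choose C hC using ih
    refine ⟨fun n => C n.unpair.1 n.unpair.2, fun x y hxy z => ?_⟩
    simp only [Set.mem_iUnion]
    refine exists_congr fun i => hC i x y (fun n => ?_) z
    simpa using hxy (Nat.pair i n)

/-- If `|Γ| > 𝔠` then `|Γ|` is not a Kunen cardinal: there is a subset of `Γ × Γ`
not belonging to the product σ-algebra `P(Γ) ⊗ P(Γ)`. -/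
theorem stmt12 (Γ : Type*) (h : Cardinal.continuum < Cardinal.mk Γ) :
    ∃ S : Set (Γ × Γ), ¬ @MeasurableSet _ (productSigma Γ) S := by
  refine ⟨{p | p.1 = p.2}, fun hS => ?_⟩
  obtain ⟨C, hC⟩ := productSigma_aux Γ _ hS
  have hinj : Function.Injective (fun x : Γ => {n : ℕ | x ∈ C n}) := by
    intro x y hxy
    have := (hC x y (fun n => Set.ext_iff.1 hxy n) x).1 rfl
    exact this.symm
  have h2 := Cardinal.mk_le_of_injective (Function.Injective.comp (ULift.up_injective) hinj)
  refine absurd h (not_lt.2 (h2.trans ?_))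
  simp
end

section
/- Let Γ be an infinite set with |Γ| ≤ 𝔠 and let τ be an n-type. Then the set Y_τ of all f ∈ C(2^Γ) having type τ belongs to Ba(C_p(2^Γ)). -/
/-- The Baire σ-algebra of the pointwise convergence topology on `C(K, ℝ)`. -/
def BaCp (K : Type*) [TopologicalSpace K] : MeasurableSpace C(K, ℝ) :=
  ⨆ t : K, MeasurableSpace.comap (fun f : C(K, ℝ) => f t) Real.measurableSpace

/-- An `n`-type: a function from `{0,1}^n` to the closed nonempty intervals of `ℝ`. -/
def IsNType {n : ℕ} (τ : (Fin n → Bool) → Set ℝ) : Prop :=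
  ∀ p : Fin n → Bool, ∃ a b : ℝ, a ≤ b ∧ τ p = Set.Icc a b

def rs (k : ℕ) (z : ℕ → Bool) : Fin k → Bool := fun i => z i

theorem rs_approx (S : Set (ℕ → Bool)) (hS : S.Finite) (g : (ℕ → Bool) → Bool) :
    ∃ k, ∃ u : (Fin k → Bool) → Bool, ∀ z ∈ S, u (rs k z) = g z := by
  have h : ∀ᶠ k in Filter.atTop, ∀ z ∈ S, ∀ w ∈ S, rs k z = rs k w → z = w := by
    rw [Filter.eventually_all_finite hS]
    intro z _
    rw [Filter.eventually_all_finite hS]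
    intro w _
    by_cases hzw : z = w
    · simp [hzw]
    · obtain ⟨m, hm⟩ := Function.ne_iff.1 hzw
      filter_upwards [Filter.eventually_gt_atTop m] with k hk he
      exact absurd (congrFun he ⟨m, hk⟩) hm
  obtain ⟨k, hk⟩ := h.exists
  refine ⟨k, fun s => g (Function.invFunOn (rs k) S s), fun z hz => ?_⟩
  have hex : ∃ a ∈ S, rs k a = rs k z := ⟨z, hz, rfl⟩
  exact congrArg g (hk _ (Function.invFunOn_mem hex) _ hz (Function.invFunOn_eq hex))

/-- If `Γ` is infinite with `|Γ| ≤ 𝔠` and `τ` is an `n`-type, then the set `Y_τ` of all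
`f ∈ C(2^Γ)` having type `τ` belongs to `Ba(C_p(2^Γ))`. -/
theorem stmt13 (Γ : Type*) [Infinite Γ] (hΓ : Cardinal.mk Γ ≤ Cardinal.continuum)
    (n : ℕ) (τ : (Fin n → Bool) → Set ℝ) (hτ : IsNType τ) :
    @MeasurableSet _ (BaCp (Γ → Bool))
      {f : C(Γ → Bool, ℝ) | ∃ γ : Fin n → Γ,
        ∀ x : Γ → Bool, f x ∈ τ (fun i => x (γ i))} := by
  letI := BaCp (Γ → Bool)
  have hev : ∀ t : Γ → Bool, Measurable (fun f : C(Γ → Bool, ℝ) => f t) := fun t =>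
    Measurable.of_comap_le (le_iSup (fun t : Γ → Bool =>
      MeasurableSpace.comap (fun f : C(Γ → Bool, ℝ) => f t) Real.measurableSpace) t)
  have hcl : ∀ p, IsClosed (τ p) := by
    intro p
    obtain ⟨a, b, _, h⟩ := hτ p
    rw [h]; exact isClosed_Icc
  obtain ⟨e⟩ : Nonempty (Γ ↪ (ℕ → Bool)) := by
    rw [← Cardinal.lift_mk_le']
    simpa using hΓ
  have key : {f : C(Γ → Bool, ℝ) | ∃ γ : Fin n → Γ,
        ∀ x : Γ → Bool, f x ∈ τ (fun i => x (γ i))} =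
      ⋂ k : ℕ, ⋃ s : Fin n → (Fin k → Bool), ⋂ u : (Fin k → Bool) → Bool,
        {f : C(Γ → Bool, ℝ) | f (fun c => u (rs k (e c))) ∈ τ (fun i => u (s i))} := by
    ext f
    simp only [Set.mem_ofPred_eq, Set.mem_iInter, Set.mem_iUnion]
    constructor
    · rintro ⟨γ, h⟩ k
      exact ⟨fun i => rs k (e (γ i)), fun u => h (fun c => u (rs k (e c)))⟩
    · intro h
      let K : ℕ → Set (Fin n → ℕ → Bool) := fun k =>
        {δ | ∀ u : (Fin k → Bool) → Bool,
          f (fun c => u (rs k (e c))) ∈ τ (fun i => u (rs k (δ i)))}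
      have hKcl : ∀ k, IsClosed (K k) := by
        intro k
        have hc : Continuous (fun δ : Fin n → ℕ → Bool => fun i => rs k (δ i)) := by
          unfold rs; fun_prop
        exact (isClosed_discrete {s : Fin n → Fin k → Bool | ∀ u : (Fin k → Bool) → Bool,
          f (fun c => u (rs k (e c))) ∈ τ (fun i => u (s i))}).preimage hc
      have hne : (⋂ k, K k).Nonempty := by
        apply IsCompact.nonempty_iInter_of_sequence_nonempty_isCompact_isClosed
        · intro k δ hδ u
          exact hδ (fun s => u (fun i => s i.castSucc))
        · intro k
          obtain ⟨s, hs⟩ := h k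
          refine ⟨fun i m => if hm : m < k then s i ⟨m, hm⟩ else false, fun u => ?_⟩
          convert hs u using 4 with i
          ext m
          simp [rs]
        · exact (hKcl 0).isCompact
        · exact hKcl
      obtain ⟨δ, hδ⟩ := hne
      rw [Set.mem_iInter] at hδ
      refine ⟨fun i => Function.invFun e (δ i), fun x => ?_⟩
      by_contra hx
      have hopen : IsOpen (f ⁻¹' (τ (fun i => x (Function.invFun e (δ i))))ᶜ) :=
        (hcl _).isOpen_compl.preimage f.continuous
      obtain ⟨F, v, hv, hsub⟩ := isOpen_pi_iff.1 hopen x hx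
      obtain ⟨k, u, hu⟩ := rs_approx (e '' (F : Set Γ) ∪ Set.range δ)
        ((F.finite_toSet.image e).union (Set.finite_range δ)) (fun z => x (Function.invFun e z))
      have h1 : (fun c => u (rs k (e c))) ∈ (F : Set Γ).pi v := by
        intro c hc
        have := hu (e c) (Or.inl ⟨c, hc, rfl⟩)
        rw [Function.leftInverse_invFun e.injective c] at this
        simp only [this]
        exact (hv c hc).2
      have h2 := hsub h1
      apply h2
      have h3 := hδ k u
      have h4 : (fun i => u (rs k (δ i))) = fun i => x (Function.invFun e (δ i)) := by
        funext i
        exact hu (δ i) (Or.inr ⟨i, rfl⟩)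
      rwa [h4] at h3
  rw [key]
  exact MeasurableSet.iInter fun k => MeasurableSet.iUnion fun s => MeasurableSet.iInter fun u =>
    hev _ (hcl _).measurableSet
end

section
/- Let Γ be a set whose cardinality is a Kunen cardinal, let τ be an n-type, let (Y, Σ) be a measurable space, and let Φ : Γ^n → P(Y) be a multifunction satisfying property (S). If A, B ⊆ Γ^n are τ-separated, then Φ(A) and Φ(B) are Σ-separated. -/
/-- `γ, δ ∈ Γ^n` are `τ`-proximal: for every `U ⊆ Γ` (encoded by its characteristic
function `U : Γ → Bool`), the sets `τ(1_U(γ₁),…,1_U(γ_n))` and `τ(1_U(δ₁),…,1_U(δ_n))`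
intersect. -/
def TauProximal {Γ : Type*} {n : ℕ} (τ : (Fin n → Bool) → Set ℝ)
    (γ δ : Fin n → Γ) : Prop :=
  ∀ U : Γ → Bool, (τ (fun i => U (γ i)) ∩ τ (fun i => U (δ i))).Nonempty

/-- `A, B ⊆ Γ^n` are `τ`-separated: no `γ ∈ A` and `δ ∈ B` are `τ`-proximal. -/
def TauSeparated {Γ : Type*} {n : ℕ} (τ : (Fin n → Bool) → Set ℝ)
    (A B : Set (Fin n → Γ)) : Prop :=
  ∀ γ ∈ A, ∀ δ ∈ B, ¬ TauProximal τ γ δ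

/-- `U, V ⊆ Y` are `Σ`-separated: there is `S ∈ Σ` with `U ⊆ S` and `V ∩ S = ∅`. -/
def SigmaSeparated {Y : Type*} (m : MeasurableSpace Y) (U V : Set Y) : Prop :=
  ∃ S : Set Y, @MeasurableSet _ m S ∧ U ⊆ S ∧ V ∩ S = ∅

/-- The image `Φ(A) = ⋃_{γ ∈ A} Φ(γ)` of a set under a multifunction. -/
def MultiImage {Γ Y : Type*} {n : ℕ} (Φ : (Fin n → Γ) → Set Y)
    (A : Set (Fin n → Γ)) : Set Y :=
  ⋃ γ ∈ A, Φ γ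

/-- Property (S) of a multifunction `Φ : Γ^n → P(Y)` with respect to a type `τ` and a
σ-algebra `Σ` on `Y`. -/
def PropertyS {Γ Y : Type*} {n : ℕ} (τ : (Fin n → Bool) → Set ℝ)
    (m : MeasurableSpace Y) (Φ : (Fin n → Γ) → Set Y) : Prop :=
  ∀ (U : Γ → Bool) (I : Set ℝ), IsClosed I →
    SigmaSeparated m
      (MultiImage Φ {γ | τ (fun i => U (γ i)) ⊆ I})
      (MultiImage Φ {γ | τ (fun i => U (γ i)) ∩ I = ∅})

/-- A set of tuples is pulled back from a Borel set of tuples in Cantor space. -/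
def K14Coded {Γ : Type*} {ι : Type*} (f : Γ → (ℕ → Bool)) (S : Set (ι → Γ)) : Prop :=
  ∃ C : Set (ι → (ℕ → Bool)), MeasurableSet C ∧ S = {γ | (fun i => f (γ i)) ∈ C}

theorem k14_merge {Γ : Type*} (f : ℕ → Γ → (ℕ → Bool)) :
    ∃ F : Γ → (ℕ → Bool), ∀ i, ∃ g : (ℕ → Bool) → (ℕ → Bool), Measurable g ∧
      ∀ x, f i x = g (F x) := by
  refine ⟨fun x m => f m.unpair.1 x m.unpair.2, fun i =>
    ⟨fun x j => x (Nat.pair i j), ?_, ?_⟩⟩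
  · exact measurable_pi_lambda _ (fun j => measurable_pi_apply _)
  · intro x; funext j; simp

theorem k14_coded_comp {Γ : Type*} {ι : Type*} {f F : Γ → (ℕ → Bool)}
    {g : (ℕ → Bool) → (ℕ → Bool)} (hg : Measurable g) (h : ∀ x, f x = g (F x))
    {S : Set (ι → Γ)} (hS : K14Coded f S) : K14Coded F S := by
  obtain ⟨C, hC, rfl⟩ := hS
  refine ⟨(fun x i => g (x i)) ⁻¹' C, ?_, ?_⟩
  · exact hC.preimage (measurable_pi_lambda _ (fun i => hg.comp (measurable_pi_apply i)))
  · ext γ; simp [h]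

theorem k14_coded_of_meas {Γ : Type*} {ι : Type*} {S : Set (ι → Γ)}
    (hS : @MeasurableSet _ (@MeasurableSpace.pi ι (fun _ => Γ) (fun _ => ⊤)) S) :
    ∃ f, K14Coded f S := by
  have e : (@MeasurableSpace.pi ι (fun _ => Γ) (fun _ => ⊤)) =
      MeasurableSpace.generateFrom {S | ∃ (i : ι) (T : Set Γ), S = {γ | γ i ∈ T}} := by
    apply le_antisymm
    · refine iSup_le fun i => ?_
      rintro _ ⟨T, -, rfl⟩
      exact MeasurableSpace.measurableSet_generateFrom ⟨i, T, rfl⟩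
    · apply MeasurableSpace.generateFrom_le
      rintro _ ⟨i, T, rfl⟩
      letI : MeasurableSpace Γ := ⊤
      have : MeasurableSet T := trivial
      exact this.preimage (measurable_pi_apply i)
  rw [e] at hS
  induction S, hS using MeasurableSpace.generateFrom_induction with
  | hC S hS _ =>
    obtain ⟨i, T, rfl⟩ := hS
    classical
    refine ⟨fun x _ => decide (x ∈ T), {x | x i 0 = true}, ?_, ?_⟩
    · exact (measurableSet_singleton true).preimage
        ((measurable_pi_apply 0).comp (measurable_pi_apply i))
    · ext γ; simp
  | empty => exact ⟨fun _ _ => true, ∅, MeasurableSet.empty, by simp⟩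
  | compl S _ ih =>
    obtain ⟨f, C, hC, rfl⟩ := ih
    exact ⟨f, Cᶜ, hC.compl, rfl⟩
  | iUnion s _ ih =>
    choose f hf using ih
    obtain ⟨F, hF⟩ := k14_merge f
    choose g hg hgF using hF
    have := fun i => k14_coded_comp (hg i) (hgF i) (hf i)
    choose C hC hCs using this
    refine ⟨F, ⋃ i, C i, MeasurableSet.iUnion hC, ?_⟩
    ext γ
    simp only [Set.mem_iUnion, Set.mem_ofPred_eq]
    exact exists_congr fun i => by rw [hCs i]; rfl

theorem k14_all_meas_fin {Γ : Type*} (hΓ : IsKunen Γ) (k : ℕ) (S : Set (Fin k → Γ)) :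
    @MeasurableSet _ (@MeasurableSpace.pi (Fin k) (fun _ => Γ) (fun _ => ⊤)) S := by
  letI : MeasurableSpace Γ := ⊤
  rcases finite_or_infinite Γ with hfin | hinf
  · exact (Set.toFinite S).measurableSet
  have key : ∀ T : Set (Γ × Γ), MeasurableSet T := by
    have hle : productSigma Γ ≤ (inferInstance : MeasurableSpace (Γ × Γ)) := by
      apply MeasurableSpace.generateFrom_le
      rintro _ ⟨A, B, rfl⟩
      exact MeasurableSet.prod trivial trivial
    intro T
    apply hle
    rw [show productSigma Γ = ⊤ from hΓ]
    trivial
  induction k with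
  | zero => exact (Set.toFinite S).measurableSet
  | succ k ih =>
    obtain ⟨f⟩ : Nonempty ((Fin k → Γ) ↪ Γ) := by
      rw [← Cardinal.le_def]
      have h := Cardinal.power_nat_le (n := k) (Cardinal.aleph0_le_mk Γ)
      simpa using h
    have hf : Measurable f := fun T _ => ih _
    have hm : Measurable (fun γ : Fin (k+1) → Γ => (γ 0, f (fun i => γ i.succ))) := by
      refine (measurable_pi_apply 0).prodMk (hf.comp ?_)
      exact measurable_pi_lambda _ (fun i => measurable_pi_apply _)
    convert hm (key ((fun γ : Fin (k+1) → Γ => (γ 0, f (fun i => γ i.succ))) '' S)) using 1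
    rw [Set.preimage_image_eq]
    intro a b hab
    simp only [Prod.mk.injEq] at hab
    funext i
    refine Fin.cases hab.1 (fun i => ?_) i
    exact congrFun (f.injective hab.2) i

theorem k14_coded {Γ : Type*} (hΓ : IsKunen Γ) {ι : Type*} [Finite ι] (S : Set (ι → Γ)) :
    ∃ f, K14Coded f S := by
  obtain ⟨k, ⟨e⟩⟩ := Finite.exists_equiv_fin ι
  obtain ⟨f, C, hC, h⟩ := k14_coded_of_meas
    (k14_all_meas_fin hΓ k ((fun γ : Fin k → Γ => fun i => γ (e i)) ⁻¹' S))
  refine ⟨f, (fun x : ι → (ℕ → Bool) => fun i => x (e.symm i)) ⁻¹' C, ?_, ?_⟩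
  · exact hC.preimage (measurable_pi_lambda _ (fun i => measurable_pi_apply _))
  · ext γ
    have := Set.ext_iff.1 h (fun i => γ (e.symm i))
    simpa using this

theorem k14_inj {Γ : Type*} (hΓ : IsKunen Γ) : ∃ f : Γ → (ℕ → Bool), Function.Injective f := by
  obtain ⟨f, C, hC, h⟩ := k14_coded hΓ {γ : Fin 2 → Γ | γ 0 = γ 1}
  refine ⟨f, fun x y hxy => ?_⟩
  have h1 := (Set.ext_iff.1 h ![x, x]).1 (by simp)
  have h2 : (![x, y] : Fin 2 → Γ) ∈ {γ : Fin 2 → Γ | γ 0 = γ 1} := by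
    rw [h]
    simp only [Set.mem_ofPred_eq] at h1 ⊢
    convert h1 using 1
    funext i
    fin_cases i <;> simp [hxy]
  simpa using h2

theorem k14_codedAll {Γ : Type*} (hΓ : IsKunen Γ) {κ : Type*} [Countable κ] {ι : κ → Type*}
    [∀ k, Finite (ι k)] (S : ∀ k, Set (ι k → Γ)) :
    ∃ f : Γ → (ℕ → Bool), Function.Injective f ∧ ∀ k, K14Coded f (S k) := by
  choose f hf using fun k => k14_coded hΓ (S k)
  obtain ⟨f0, hf0⟩ := k14_inj hΓ
  obtain ⟨c, hc⟩ := exists_injective_nat (Option κ)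
  let f' : Option κ → Γ → (ℕ → Bool) := fun o => o.elim f0 f
  obtain ⟨F, hF⟩ := k14_merge (fun i => Function.extend c f' (fun _ => f0) i)
  have hF' : ∀ o, ∃ g : (ℕ → Bool) → (ℕ → Bool), Measurable g ∧ ∀ x, f' o x = g (F x) := by
    intro o
    obtain ⟨g, hg, h⟩ := hF (c o)
    refine ⟨g, hg, fun x => ?_⟩
    rw [← h x, hc.extend_apply]
  refine ⟨F, ?_, fun k => ?_⟩
  · obtain ⟨g, hg, h⟩ := hF' none
    intro x y hxy
    apply hf0
    have h1 := h x
    have h2 := h y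
    rw [hxy, ← h2] at h1
    exact h1
  · obtain ⟨g, hg, h⟩ := hF' (some k)
    exact k14_coded_comp hg h (hf k)

/-- Borel separated hulls in Cantor space. -/
theorem k14_hull {Γ : Type*} (hΓ : IsKunen Γ) {n : ℕ}
    (τ : (Fin n → Bool) → Set ℝ) (A B : Set (Fin n → Γ)) (hAB : TauSeparated τ A B) :
    ∃ f : Γ → (ℕ → Bool), ∃ A' B' : Set (Fin n → (ℕ → Bool)), MeasurableSet A' ∧
      MeasurableSet B' ∧ (∀ γ ∈ A, (fun i => f (γ i)) ∈ A') ∧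
      (∀ γ ∈ B, (fun i => f (γ i)) ∈ B') ∧ TauSeparated τ A' B' := by
  classical
  let ι := Fin n ⊕ Fin n
  let Pat := (Fin n → ι) × (Fin n → ι)
  let K : Pat → Type := fun e => {k : ι // (∃ i, e.1 i = k) ∧ (∃ i, e.2 i = k)}
  let s : ∀ e : Pat, K e → Fin n := fun e k => k.2.1.choose
  let s' : ∀ e : Pat, K e → Fin n := fun e k => k.2.2.choose
  have hs : ∀ e (k : K e), e.1 (s e k) = k.1 := fun e k => k.2.1.choose_spec
  have hs' : ∀ e (k : K e), e.2 (s' e k) = k.1 := fun e k => k.2.2.choose_spec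
  let bad : Pat → Prop := fun e => ∀ W : ι → Bool,
    (τ (fun i => W (e.1 i)) ∩ τ (fun i => W (e.2 i))).Nonempty
  let A1 : ∀ e : Pat, Set (K e → Γ) := fun e =>
    {w | ∃ γ ∈ A, (∀ i j, e.1 i = e.1 j → γ i = γ j) ∧ ∀ k, γ (s e k) = w k}
  obtain ⟨f, hf, hc⟩ := k14_codedAll hΓ A1
  choose C hC hCA using hc
  have hmR : ∀ (e : Fin n → ι), MeasurableSet
      {x : Fin n → (ℕ → Bool) | ∀ i j, e i = e j → x i = x j} := by
    intro e
    simp only [Set.ofPred_forall]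
    refine MeasurableSet.iInter fun i => MeasurableSet.iInter fun j =>
      MeasurableSet.iInter fun _ => ?_
    exact measurableSet_eq_fun (measurable_pi_apply i) (measurable_pi_apply j)
  have hmC : ∀ (e : Pat) (s : K e → Fin n), MeasurableSet
      {x : Fin n → (ℕ → Bool) | (fun k => x (s k)) ∈ C e} := by
    intro e s
    exact (hC e).preimage (measurable_pi_lambda _ fun k => measurable_pi_apply _)
  refine ⟨f, ⋂ e : Pat, ⋂ _ : bad e, {x | (∀ i j, e.1 i = e.1 j → x i = x j)}ᶜ ∪
      {x | (fun k => x (s e k)) ∈ C e},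
    ⋂ e : Pat, ⋂ _ : bad e, {x | (∀ i j, e.2 i = e.2 j → x i = x j)}ᶜ ∪
      {x | (fun k => x (s' e k)) ∈ C e}ᶜ, ?_, ?_, ?_, ?_, ?_⟩
  · exact MeasurableSet.iInter fun e => MeasurableSet.iInter fun _ =>
      (hmR e.1).compl.union (hmC e _)
  · exact MeasurableSet.iInter fun e => MeasurableSet.iInter fun _ =>
      (hmR e.2).compl.union (hmC e _).compl
  · intro γ hγ
    simp only [Set.mem_iInter]
    intro e _
    by_cases h : ∀ i j, e.1 i = e.1 j → γ i = γ j
    · right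
      have : (fun k => γ (s e k)) ∈ A1 e := ⟨γ, hγ, h, fun _ => rfl⟩
      rw [hCA e] at this
      exact this
    · left
      exact fun h' => h fun i j hij => hf (h' i j hij)
  · intro δ hδ
    simp only [Set.mem_iInter]
    intro e he
    by_cases h : ∀ i j, e.2 i = e.2 j → δ i = δ j
    · right
      intro h2
      have h3 : (fun k => δ (s' e k)) ∈ A1 e := by
        rw [hCA e]; exact h2
      obtain ⟨γ, hγ, hr, hk⟩ := h3
      apply hAB γ hγ δ hδ
      intro U
      let W : ι → Bool := fun k =>
        if h : ∃ i, e.1 i = k then U (γ h.choose)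
        else if h : ∃ i, e.2 i = k then U (δ h.choose) else false
      have h1 : ∀ i, W (e.1 i) = U (γ i) := by
        intro i
        have hex : ∃ j, e.1 j = e.1 i := ⟨i, rfl⟩
        simp only [W, dif_pos hex]
        rw [hr _ _ hex.choose_spec]
      have h2 : ∀ i, W (e.2 i) = U (δ i) := by
        intro i
        have hex2 : ∃ j, e.2 j = e.2 i := ⟨i, rfl⟩
        by_cases hex : ∃ j, e.1 j = e.2 i
        · let k : K e := ⟨e.2 i, hex, hex2⟩
          have e1 : e.1 (s e k) = e.2 i := hs e k
          have e2 : e.2 (s' e k) = e.2 i := hs' e k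
          rw [← e1, h1, hk k]; exact congrArg U (h _ _ e2)
        · simp only [W, dif_neg hex, dif_pos hex2]
          rw [h _ _ hex2.choose_spec]
      have := he W
      simpa only [h1, h2] using this
    · left
      exact fun h' => h fun i j hij => hf (h' i j hij)
  · intro x hx x' hx' hprox
    let g : ι → (ℕ → Bool) := Sum.elim x x'
    have hex : ∀ a, ∃ b, g b = g a := fun a => ⟨a, rfl⟩
    let r : ι → ι := fun a => (hex a).choose
    have hr : ∀ a, g (r a) = g a := fun a => (hex a).choose_spec
    let e : Pat := (fun i => r (Sum.inl i), fun i => r (Sum.inr i))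
    have hb : bad e := by
      intro W
      let U : (ℕ → Bool) → Bool := fun y => if h : ∃ b, g b = y then W h.choose else false
      have hU : ∀ a, U (g a) = W (r a) := fun a => by
        simp only [U, dif_pos (hex a)]; rfl
      have h1 : ∀ i, U (x i) = W (e.1 i) := fun i => hU (Sum.inl i)
      have h2 : ∀ i, U (x' i) = W (e.2 i) := fun i => hU (Sum.inr i)
      have := hprox U
      simpa only [h1, h2] using this
    have hx1 : ∀ i, g (e.1 i) = x i := fun i => hr (Sum.inl i)
    have hx2 : ∀ i, g (e.2 i) = x' i := fun i => hr (Sum.inr i)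
    simp only [Set.mem_iInter] at hx hx'
    have a1 := (hx e hb).resolve_left (fun h => h fun i j hij => by
      rw [← hx1, ← hx1, hij])
    have a2 := (hx' e hb).resolve_left (fun h => h fun i j hij => by
      rw [← hx2, ← hx2, hij])
    apply a2
    have : (fun k => x' (s' e k)) = (fun k => x (s e k)) := by
      funext k
      rw [← hx1, ← hx2, hs, hs']
    simp only [Set.mem_ofPred_eq] at a1 ⊢
    rw [this]; exact a1

/-- Index type of clopen sets. -/
abbrev K14Clop := Σ N : ℕ, ((Fin N → Bool) → Bool)

/-- The characteristic function of the clopen set with the given index. -/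
def k14U (k : K14Clop) (x : ℕ → Bool) : Bool := k.2 (fun i => x i)

theorem k14U_meas (k : K14Clop) : Measurable (k14U k) := by
  have h : Measurable (fun x : ℕ → Bool => (fun i : Fin k.1 => x i)) :=
    measurable_pi_lambda _ fun i => measurable_pi_apply _
  exact (measurable_of_countable k.2).comp h

theorem k14_approx {ι : Type*} [Finite ι] (g : ι → (ℕ → Bool)) (U : (ℕ → Bool) → Bool) :
    ∃ k, ∀ i, k14U k (g i) = U (g i) := by
  classical
  haveI := Fintype.ofFinite ι
  have h : ∀ i j, ∃ m, g i ≠ g j → g i m ≠ g j m := by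
    intro i j
    by_cases hij : g i = g j
    · exact ⟨0, fun h => absurd hij h⟩
    · obtain ⟨m, hm⟩ := Function.ne_iff.1 hij
      exact ⟨m, fun _ => hm⟩
  choose m hm using h
  let N := (Finset.univ.sup fun p : ι × ι => m p.1 p.2) + 1
  have hN : ∀ i j, m i j < N := fun i j =>
    Nat.lt_succ_of_le (Finset.le_sup (f := fun p : ι × ι => m p.1 p.2) (Finset.mem_univ (i, j)))
  refine ⟨⟨N, fun w => if h : ∃ i, (fun l : Fin N => g i l) = w then U (g h.choose) else false⟩,
    fun i => ?_⟩
  have hex : ∃ j, (fun l : Fin N => g j l) = (fun l : Fin N => g i l) := ⟨i, rfl⟩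
  simp only [k14U, dif_pos hex]
  congr 1
  by_contra hne
  exact hm _ _ hne (congrFun hex.choose_spec ⟨_, hN _ _⟩)

/-- If `|Γ|` is a Kunen cardinal, `τ` is an `n`-type and `Φ` satisfies property (S),
then `Φ` maps `τ`-separated sets to `Σ`-separated sets. -/
theorem stmt14 (Γ : Type*) (hΓ : IsKunen Γ) (n : ℕ)
    (τ : (Fin n → Bool) → Set ℝ) (hτ : IsNType τ)
    (Y : Type*) (m : MeasurableSpace Y) (Φ : (Fin n → Γ) → Set Y)
    (hS : PropertyS τ m Φ)
    (A B : Set (Fin n → Γ)) (hAB : TauSeparated τ A B) :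
    SigmaSeparated m (MultiImage Φ A) (MultiImage Φ B) := by
  classical
  obtain ⟨f, A', B', hA', hB', hA, hB, hsep⟩ := k14_hull hΓ τ A B hAB
  have hcl : ∀ p, IsClosed (τ p) := by
    intro p
    obtain ⟨a, b, -, h⟩ := hτ p
    rw [h]; exact isClosed_Icc
  let κ := K14Clop × (Fin n → Bool)
  choose S hSm hS1 hS2 using fun k : κ => hS (fun x => k14U k.1 (f x)) (τ k.2) (hcl k.2)
  let t : Y → (κ → Bool) := fun y k => decide (y ∈ S k)
  have ht : Measurable t := by
    refine measurable_pi_lambda _ fun k => ?_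
    exact measurable_to_bool (by simpa [Set.preimage, t] using hSm k)
  let R : Set ((Fin n → (ℕ → Bool)) × (κ → Bool)) :=
    {z | ∀ k : κ, (τ (fun i => k14U k.1 (z.1 i)) ⊆ τ k.2 → z.2 k = true) ∧
      (τ (fun i => k14U k.1 (z.1 i)) ∩ τ k.2 = ∅ → z.2 k = false)}
  have hR : MeasurableSet R := by
    simp only [R, Set.ofPred_forall]
    refine MeasurableSet.iInter fun k => ?_
    have h1 : Measurable (fun z : (Fin n → (ℕ → Bool)) × (κ → Bool) =>
        ((fun i => k14U k.1 (z.1 i) : Fin n → Bool), z.2 k)) := by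
      refine Measurable.prodMk (measurable_pi_lambda _ fun i => ?_) ?_
      · exact (k14U_meas k.1).comp ((measurable_pi_apply i).comp measurable_fst)
      · exact (measurable_pi_apply k).comp measurable_snd
    exact h1 (t := {w : (Fin n → Bool) × Bool | (τ w.1 ⊆ τ k.2 → w.2 = true) ∧
      (τ w.1 ∩ τ k.2 = ∅ → w.2 = false)}) (Set.toFinite _).measurableSet
  have hRt : ∀ γ, ∀ y ∈ Φ γ, ((fun i => f (γ i)), t y) ∈ R := by
    intro γ y hy k
    constructor
    · intro h
      have : y ∈ S k := hS1 k (Set.mem_biUnion (x := γ) h hy)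
      simpa [t] using this
    · intro h
      have : y ∉ S k := fun hyS => by
        have : y ∈ (∅ : Set Y) := by
          rw [← hS2 k]
          exact ⟨Set.mem_biUnion (x := γ) h hy, hyS⟩
        exact this
      simpa [t] using this
  have han : ∀ D : Set (Fin n → (ℕ → Bool)), MeasurableSet D →
      MeasureTheory.AnalyticSet (Prod.snd '' (R ∩ Prod.fst ⁻¹' D)) := fun D hD =>
    (hR.inter (measurable_fst hD)).analyticSet_image measurable_snd
  have hdisj : Disjoint (Prod.snd '' (R ∩ Prod.fst ⁻¹' A')) (Prod.snd '' (R ∩ Prod.fst ⁻¹' B')) := by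
    rw [Set.disjoint_left]
    rintro _ ⟨⟨x, u⟩, ⟨hx, hxA⟩, rfl⟩ ⟨⟨x', u'⟩, ⟨hx', hxB⟩, huu⟩
    simp only at huu
    subst huu
    apply hsep x hxA x' hxB
    intro U
    by_contra hne
    rw [Set.not_nonempty_iff_eq_empty] at hne
    obtain ⟨k, hk⟩ := k14_approx (Sum.elim x x') U
    have k1 : ∀ i, k14U k (x i) = U (x i) := fun i => hk (Sum.inl i)
    have k2 : ∀ i, k14U k (x' i) = U (x' i) := fun i => hk (Sum.inr i)
    have q1 := (hx (k, fun i => U (x i))).1 (by simp [k1])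
    have q2 := (hx' (k, fun i => U (x i))).2 (by simp only [k2]; rw [Set.inter_comm]; exact hne)
    simp only at q1 q2
    rw [q1] at q2
    exact absurd q2 (by simp)
  obtain ⟨C, hC1, hC2, hCm⟩ := (han A' hA').measurablySeparable (han B' hB') hdisj
  refine ⟨t ⁻¹' C, ht hCm, ?_, ?_⟩
  · intro y hy
    obtain ⟨γ, hγ, hy⟩ := Set.mem_iUnion₂.1 hy
    exact hC1 ⟨_, ⟨hRt γ y hy, hA γ hγ⟩, rfl⟩
  · rw [Set.eq_empty_iff_forall_notMem]
    rintro y ⟨hy, hyC⟩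
    obtain ⟨γ, hγ, hy⟩ := Set.mem_iUnion₂.1 hy
    exact Set.disjoint_left.1 hC2 ⟨_, ⟨hRt γ y hy, hB γ hγ⟩, rfl⟩ hyC
end

section
/- Let Γ be a set, τ an n-type, and γ⁰, γ¹ ∈ Γ^n. Then γ⁰ and γ¹ are τ-proximal if and only if there is a τ-proximality relation E on {1,…,n} × {0,1} such that for all (p,i),(q,j) ∈ {1,…,n} × {0,1}, (p,i) E (q,j) implies γ^i_p = γ^j_q. -/
/-- `E` is a `τ`-proximality relation on `{1,…,n} × {0,1}`: an equivalence relation such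
that `τ(g⁰) ∩ τ(g¹) ≠ ∅` whenever `g⁰, g¹ ∈ {0,1}^n` satisfy
`(p,i) E (q,j) → g^i_p = g^j_q`. -/
def IsProxRel {n : ℕ} (τ : (Fin n → Bool) → Set ℝ)
    (E : (Fin n × Bool) → (Fin n × Bool) → Prop) : Prop :=
  Equivalence E ∧
    ∀ g : Bool → (Fin n → Bool),
      (∀ (p q : Fin n) (i j : Bool), E (p, i) (q, j) → g i p = g j q) →
      (τ (g false) ∩ τ (g true)).Nonempty

/-- `γ⁰, γ¹ ∈ Γ^n` are `τ`-proximal iff there is a `τ`-proximality relation `E` such that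
`(p,i) E (q,j)` implies `γ^i_p = γ^j_q`. -/
theorem stmt15 (Γ : Type*) (n : ℕ) (τ : (Fin n → Bool) → Set ℝ) (hτ : IsNType τ)
    (γ0 γ1 : Fin n → Γ) :
    TauProximal τ γ0 γ1 ↔
      ∃ E : (Fin n × Bool) → (Fin n × Bool) → Prop, IsProxRel τ E ∧
        ∀ (p q : Fin n) (i j : Bool), E (p, i) (q, j) →
          (if i then γ1 else γ0) p = (if j then γ1 else γ0) q := by
  classical
  constructor
  · intro h
    refine ⟨fun a b => (if a.2 then γ1 else γ0) a.1 = (if b.2 then γ1 else γ0) b.1,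
      ⟨⟨fun _ => rfl, fun h => h.symm, fun h h' => h.trans h'⟩, ?_⟩, fun p q i j h => h⟩
    intro g hg
    have key : ∀ (p : Fin n) (i : Bool),
        decide (∃ (q : Fin n) (j : Bool),
          (if j then γ1 else γ0) q = (if i then γ1 else γ0) p ∧ g j q = true) = g i p := by
      intro p i
      rw [Bool.eq_iff_iff, decide_eq_true_iff]
      constructor
      · rintro ⟨q, j, h1, h2⟩
        rw [← hg q p j i h1]
        exact h2
      · intro h1
        exact ⟨p, i, rfl, h1⟩
    have h0 := h (fun x => decide (∃ (q : Fin n) (j : Bool),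
      (if j then γ1 else γ0) q = x ∧ g j q = true))
    have e0 := funext fun p => key p false
    have e1 := funext fun p => key p true
    rw [← e0, ← e1]
    exact h0
  · rintro ⟨E, ⟨_, hE⟩, hγ⟩ U
    exact hE (fun i p => U ((if i then γ1 else γ0) p))
      (fun p q i j h => congrArg U (hγ p q i j h))
end

section
/- Let Γ be a set, τ an n-type, (Y, Σ) a measurable space, and Φ : Γ^n → P(Y) a multifunction satisfying property (S). If A = W₁ × ⋯ × W_n and B = W'₁ × ⋯ × W'_n are products of subsets of Γ and A and B are τ-separated, then Φ(A) and Φ(B) are Σ-separated. -/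
/-- If `A = W₁ × ⋯ × W_n` and `B = W'₁ × ⋯ × W'_n` are products of subsets of `Γ` which
are `τ`-separated, and `Φ` satisfies property (S), then `Φ(A)` and `Φ(B)` are
`Σ`-separated. -/
theorem stmt16 (Γ : Type*) (n : ℕ) (τ : (Fin n → Bool) → Set ℝ) (hτ : IsNType τ)
    (Y : Type*) (m : MeasurableSpace Y) (Φ : (Fin n → Γ) → Set Y)
    (hS : PropertyS τ m Φ)
    (W W' : Fin n → Set Γ)
    (hAB : TauSeparated τ (Set.univ.pi W) (Set.univ.pi W')) :
    SigmaSeparated m (MultiImage Φ (Set.univ.pi W)) (MultiImage Φ (Set.univ.pi W')) := by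
  classical
  let c : Γ → Set (Fin n) × Set (Fin n) := fun x => ({i | x ∈ W i}, {i | x ∈ W' i})
  let r : Γ → Γ := fun x => (Quotient.mk (Setoid.ker c) x).out
  have hcr : ∀ x, c (r x) = c x := fun x => by
    have := Quotient.mk_out (s := Setoid.ker c) x
    exact this
  have hrc : ∀ x y, c x = c y → r x = r y := fun x y h => by
    have : Quotient.mk (Setoid.ker c) x = Quotient.mk (Setoid.ker c) y := Quotient.sound h
    simp only [r, this]
  have hW : ∀ x i, x ∈ W i → r x ∈ W i := fun x i h => by
    have h1 : (c (r x)).1 = (c x).1 := by rw [hcr]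
    have h2 : i ∈ (c x).1 := h
    rw [← h1] at h2
    exact h2
  have hW' : ∀ x i, x ∈ W' i → r x ∈ W' i := fun x i h => by
    have h1 : (c (r x)).2 = (c x).2 := by rw [hcr]
    have h2 : i ∈ (c x).2 := h
    rw [← h1] at h2
    exact h2
  have key : ∀ κ l : Fin n → Set (Fin n) × Set (Fin n), ∃ S : Set Y, @MeasurableSet _ m S ∧
      (∀ γ ∈ Set.univ.pi W, (∀ i, c (γ i) = κ i) → Φ γ ⊆ S) ∧
      (∀ δ ∈ Set.univ.pi W', (∀ i, c (δ i) = l i) → ∀ y ∈ Φ δ, y ∉ S) := by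
    intro κ l
    by_cases hA : ∃ γ ∈ Set.univ.pi W, ∀ i, c (γ i) = κ i
    swap
    · exact ⟨∅, MeasurableSet.empty, fun γ h1 h2 => (hA ⟨γ, h1, h2⟩).elim, by simp⟩
    by_cases hB : ∃ δ ∈ Set.univ.pi W', ∀ i, c (δ i) = l i
    swap
    · exact ⟨Set.univ, MeasurableSet.univ, by simp, fun γ h1 h2 => (hB ⟨γ, h1, h2⟩).elim⟩
    obtain ⟨γ₀, hγ₀, hκ⟩ := hA
    obtain ⟨δ₀, hδ₀, hl⟩ := hB
    have hn := hAB (fun i => r (γ₀ i)) (fun i hi => hW _ _ (hγ₀ i hi))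
      (fun i => r (δ₀ i)) (fun i hi => hW' _ _ (hδ₀ i hi))
    unfold TauProximal at hn
    push Not at hn
    obtain ⟨U, hU⟩ := hn
    obtain ⟨a, b, -, hab⟩ := hτ (fun i => U (r (γ₀ i)))
    obtain ⟨S, hSm, hS1, hS2⟩ := hS (fun x => U (r x)) (τ (fun i => U (r (γ₀ i))))
      (by rw [hab]; exact isClosed_Icc)
    refine ⟨S, hSm, ?_, ?_⟩
    · intro γ _ h2
      have h3 : (fun i => U (r (γ i))) = fun i => U (r (γ₀ i)) := by
        funext i
        rw [hrc (γ i) (γ₀ i) ((h2 i).trans (hκ i).symm)]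
      refine Set.Subset.trans ?_ hS1
      refine Set.subset_biUnion_of_mem (u := Φ) ?_
      show τ (fun i => U (r (γ i))) ⊆ _
      rw [h3]
    · intro δ _ h2 y hy hyS
      have h3 : (fun i => U (r (δ i))) = fun i => U (r (δ₀ i)) := by
        funext i
        rw [hrc (δ i) (δ₀ i) ((h2 i).trans (hl i).symm)]
      have : y ∈ (∅ : Set Y) := by
        rw [← hS2]
        refine ⟨Set.mem_biUnion (t := Φ) (x := δ) ?_ hy, hyS⟩
        show τ (fun i => U (r (δ i))) ∩ _ = ∅
        rw [h3, Set.inter_comm]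
        exact hU
      exact this
  choose S hSm hS1 hS2 using key
  refine ⟨⋃ κ, ⋂ l, S κ l,
    MeasurableSet.iUnion fun κ => MeasurableSet.iInter fun l => hSm κ l, ?_, ?_⟩
  · intro y hy
    simp only [MultiImage, Set.mem_iUnion] at hy
    obtain ⟨γ, hγ, hy⟩ := hy
    refine Set.mem_iUnion.2 ⟨fun i => c (γ i), Set.mem_iInter.2 fun l => ?_⟩
    exact hS1 _ l γ hγ (fun _ => rfl) hy
  · rw [Set.eq_empty_iff_forall_notMem]
    rintro y ⟨hy, hyS⟩
    simp only [MultiImage, Set.mem_iUnion] at hy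
    obtain ⟨δ, hδ, hy⟩ := hy
    obtain ⟨κ, hκ⟩ := Set.mem_iUnion.1 hyS
    exact hS2 κ _ δ hδ (fun _ => rfl) y hy (Set.mem_iInter.1 hκ _)
end

section
/- Let K be a compact Hausdorff space such that u(F, J) ∈ Ba(C_p(K)) for every n ∈ ℕ, every closed set F ⊆ K^n and every n-tuple J of open intervals with rational endpoints. Then Ba(C_p(K)) = Bo(C_p(K)), i.e. the σ-algebra generated by the evaluation maps coincides with the Borel σ-algebra of the pointwise convergence topology on C(K). -/
/-- The topology of pointwise convergence on `C(K, ℝ)`. -/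
def ptTop (K : Type*) [TopologicalSpace K] : TopologicalSpace C(K, ℝ) :=
  TopologicalSpace.induced (fun f : C(K, ℝ) => (f : K → ℝ)) Pi.topologicalSpace

/-- `u(A, J) = {g ∈ C(K) : ∃ (x₁,…,x_n) ∈ A, g(x_k) ∈ J_k for all k}`. -/
def uSet (K : Type*) [TopologicalSpace K] (n : ℕ) (A : Set (Fin n → K))
    (J : Fin n → Set ℝ) : Set C(K, ℝ) :=
  {g | ∃ x ∈ A, ∀ k : Fin n, g (x k) ∈ J k}

theorem uSet_closure_eq (K : Type*) [TopologicalSpace K] (n : ℕ) (A : Set (Fin n → K))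
    (J : Fin n → Set ℝ) (hJ : ∀ k, IsOpen (J k)) :
    uSet K n (closure A) J = uSet K n A J := by
  ext g
  constructor
  · rintro ⟨x, hx, hg⟩
    have ho : IsOpen {y : Fin n → K | ∀ k, g (y k) ∈ J k} := by
      rw [Set.setOf_forall]
      exact isOpen_iInter_of_finite fun k =>
        (hJ k).preimage (g.continuous.comp (continuous_apply k))
    obtain ⟨y, hy, hyA⟩ := mem_closure_iff.1 hx _ ho hg
    exact ⟨y, hyA, hy⟩
  · rintro ⟨x, hx, hg⟩
    exact ⟨x, subset_closure hx, hg⟩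

theorem open_eq_iUnion (K : Type*) [TopologicalSpace K] (U : Set C(K, ℝ))
    (hU : @IsOpen _ (ptTop K) U) :
    U = ⋃ p : (Σ n : ℕ, (Fin n → ℚ × ℚ)),
      uSet K p.1 {x | ∀ g : C(K, ℝ),
        (∀ k, g (x k) ∈ Set.Ioo ((p.2 k).1 : ℝ) ((p.2 k).2 : ℝ)) → g ∈ U}
        (fun k => Set.Ioo ((p.2 k).1 : ℝ) ((p.2 k).2 : ℝ)) := by
  obtain ⟨V, hV, rfl⟩ := hU
  ext g
  simp only [Set.mem_iUnion]
  constructor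
  · intro hg
    obtain ⟨I, u, hu, hsub⟩ := isOpen_pi_iff.1 hV _ hg
    have hb : ∀ k : Fin I.card, ∃ q : ℚ × ℚ,
        g (I.equivFin.symm k) ∈ Set.Ioo (q.1 : ℝ) (q.2 : ℝ) ∧
        Set.Ioo (q.1 : ℝ) (q.2 : ℝ) ⊆ u (I.equivFin.symm k) := by
      intro k
      obtain ⟨h1, h2⟩ := hu _ (I.equivFin.symm k).2
      obtain ⟨v, hv, hgv, hvu⟩ :=
        Real.isTopologicalBasis_Ioo_rat.exists_subset_of_mem_open h2 h1
      simp only [Set.mem_iUnion, Set.mem_singleton_iff] at hv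
      obtain ⟨a, b, _, rfl⟩ := hv
      exact ⟨(a, b), hgv, hvu⟩
    choose q hq1 hq2 using hb
    refine ⟨⟨I.card, q⟩, fun k => I.equivFin.symm k, ?_, hq1⟩
    intro f hf
    apply hsub
    intro a ha
    have := hq2 _ (hf (I.equivFin ⟨a, ha⟩))
    simpa using this
  · rintro ⟨p, x, hx, hg⟩
    exact hx g hg

theorem stmt17 (K : Type*) [TopologicalSpace K] [CompactSpace K] [T2Space K]
    (h : ∀ (n : ℕ) (F : Set (Fin n → K)), IsClosed F →
      ∀ J : Fin n → Set ℝ, (∀ k, ∃ p q : ℚ, J k = Set.Ioo (p : ℝ) (q : ℝ)) →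
        @MeasurableSet _ (BaCp K) (uSet K n F J)) :
    BaCp K = MeasurableSpace.generateFrom {s : Set C(K, ℝ) | @IsOpen _ (ptTop K) s} := by
  apply le_antisymm
  · refine iSup_le fun t => ?_
    rw [BorelSpace.measurable_eq (α := ℝ), borel, MeasurableSpace.comap_generateFrom]
    apply MeasurableSpace.generateFrom_mono
    rintro _ ⟨s, hs, rfl⟩
    exact ⟨(fun f : K → ℝ => f t) ⁻¹' s, IsOpen.preimage (continuous_apply t) hs, rfl⟩
  · apply MeasurableSpace.generateFrom_le
    intro U hU
    rw [open_eq_iUnion K U hU]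
    refine @MeasurableSet.iUnion _ _ (BaCp K) _ _ fun p => ?_
    rw [← uSet_closure_eq K p.1 _ _ (fun k => isOpen_Ioo)]
    exact h _ _ isClosed_closure _ fun k => ⟨_, _, rfl⟩
end
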